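/- Let n ≥ 2, let A be the Cartan matrix of type B_n, and let ι be an admissible sequence in I = {1,…,n} adapted to A. Then Ξ_ι = Tab_{B,ι}, i.e. the set of all linear forms obtained by applying finitely many operators S_k to the coordinate functions x_{j_0} coincides exactly with the set of column tableaux of type B. -/

import Mathlib

noncomputable section

/-- The coordinate linear form `x_k` (as a coefficient vector). -/
def xc (k : ℕ) : ℕ → ℚ := fun l => if l = k then 1 else 0

/-- Cartan matrix of type `A_n`. -/
def cartanA (_n : ℕ) (i j : ℕ) : ℤ :=
  if i = j then 2 else if i + 1 = j ∨ j + 1 = i then -1 else 0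

/-- Cartan matrix of type `B_n`. -/
def cartanB (n : ℕ) (i j : ℕ) : ℤ :=
  if i = j then 2
  else if i = n ∧ j = n - 1 then -2
  else if i + 1 = j ∨ j + 1 = i then -1 else 0

/-- Cartan matrix of type `C_n`. -/
def cartanC (n : ℕ) (i j : ℕ) : ℤ :=
  if i = j then 2
  else if i = n - 1 ∧ j = n then -2
  else if i + 1 = j ∨ j + 1 = i then -1 else 0

/-- Cartan matrix of type `D_n`. -/
def cartanD (n : ℕ) (i j : ℕ) : ℤ :=
  if i = j then 2
  else if (i = n - 1 ∧ j = n) ∨ (i = n ∧ j = n - 1) then 0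
  else if (i + 1 = j ∨ j + 1 = i) ∨ (i = n ∧ j = n - 2) ∨ (i = n - 2 ∧ j = n) then -1
  else 0

/-- `ι` (with positions indexed by `k ≥ 1`) takes values in `{1,…,n}`, has no two equal
consecutive entries, and every index occurs infinitely often. -/
def Admissible (n : ℕ) (ι : ℕ → ℕ) : Prop :=
  (∀ k, 1 ≤ k → 1 ≤ ι k ∧ ι k ≤ n) ∧
  (∀ k, 1 ≤ k → ι k ≠ ι (k + 1)) ∧
  (∀ i, 1 ≤ i → i ≤ n → ∀ N, ∃ k, N ≤ k ∧ ι k = i)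

/-- `k^+`: the next position after `k` carrying the same letter. -/
def kplus (ι : ℕ → ℕ) (k : ℕ) : ℕ := sInf {l | k < l ∧ ι l = ι k}

/-- `k^-`: the previous position (`≥ 1`) carrying the same letter, `0` if none. -/
def kminus (ι : ℕ → ℕ) (k : ℕ) : ℕ := sSup {l | 0 < l ∧ l < k ∧ ι l = ι k}

/-- The linear form `β_k` (with `β_0 = 0`). -/
def beta (A : ℕ → ℕ → ℤ) (ι : ℕ → ℕ) (k : ℕ) : ℕ → ℚ :=
  if k = 0 then 0
  else xc k + (∑ j ∈ Finset.Ioo k (kplus ι k), (A (ι k) (ι j) : ℚ) • xc j) + xc (kplus ι k)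

/-- The piecewise-linear operator `S_k`. -/
def Sop (A : ℕ → ℕ → ℤ) (ι : ℕ → ℕ) (k : ℕ) (φ : ℕ → ℚ) : ℕ → ℚ :=
  if 0 < φ k then φ - φ k • beta A ι k
  else φ - φ k • beta A ι (kminus ι k)

/-- Membership in `Ξ_ι`: forms obtained from some `x_{j_0}` by finitely many operators `S_k`. -/
inductive XiMem (A : ℕ → ℕ → ℤ) (ι : ℕ → ℕ) : (ℕ → ℚ) → Prop
  | base (k : ℕ) (hk : 1 ≤ k) : XiMem A ι (xc k)
  | step (k : ℕ) (hk : 1 ≤ k) (φ : ℕ → ℚ) (h : XiMem A ι φ) : XiMem A ι (Sop A ι k φ)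

/-- The set `Ξ_ι`. -/
def Xi (A : ℕ → ℕ → ℤ) (ι : ℕ → ℕ) : Set (ℕ → ℚ) := { φ | XiMem A ι φ }

/-- Forms obtained from a set `g` of generators by finitely many operators `S_k`. -/
inductive XiMemFrom (A : ℕ → ℕ → ℤ) (ι : ℕ → ℕ) (g : Set (ℕ → ℚ)) : (ℕ → ℚ) → Prop
  | base (φ : ℕ → ℚ) (h : φ ∈ g) : XiMemFrom A ι g φ
  | step (k : ℕ) (hk : 1 ≤ k) (φ : ℕ → ℚ) (h : XiMemFrom A ι g φ) :
      XiMemFrom A ι g (Sop A ι k φ)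

/-- `ι` is adapted to the Cartan matrix `A`: for `i ≠ j` with `a_{i,j} ≠ 0`, consecutive
members of the subsequence of `ι` consisting of the letters `i`, `j` are distinct. -/
def Adapted (n : ℕ) (A : ℕ → ℕ → ℤ) (ι : ℕ → ℕ) : Prop :=
  ∀ i j, 1 ≤ i → i ≤ n → 1 ≤ j → j ≤ n → i ≠ j → A i j ≠ 0 →
    ∀ k l, 1 ≤ k → k < l → (ι k = i ∨ ι k = j) → (ι l = i ∨ ι l = j) →
      (∀ m, k < m → m < l → ι m ≠ i ∧ ι m ≠ j) → ι k ≠ ι l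

/-- Position of the first occurrence of the letter `i` in `ι`. -/
def firstOcc (ι : ℕ → ℕ) (i : ℕ) : ℕ := sInf {k | 1 ≤ k ∧ ι k = i}

/-- `p_{i,j} = 1` iff the first occurrence of `i` precedes the first occurrence of `j`. -/
def pval (ι : ℕ → ℕ) (i j : ℕ) : ℕ := if firstOcc ι i < firstOcc ι j then 1 else 0

/-- The function `P(k)` for types A, B, C (and `P(k) = 0` for `k > n`, `k ≤ 1`). -/
def PABC (ι : ℕ → ℕ) (n k : ℕ) : ℕ :=
  if k ≤ n then ∑ t ∈ Finset.Icc 2 k, pval ι t (t - 1) else 0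

/-- The function `P(k)` for type D. -/
def PD (ι : ℕ → ℕ) (n k : ℕ) : ℕ :=
  if k = n then (∑ t ∈ Finset.Icc 2 (n - 2), pval ι t (t - 1)) + pval ι n (n - 2)
  else if k ≤ n then ∑ t ∈ Finset.Icc 2 k, pval ι t (t - 1) else 0

/-- `occPos ι j s`: the position of the `s`-th occurrence of the letter `j` in `ι`
(`0` for `s = 0`). -/
def occPos (ι : ℕ → ℕ) (j : ℕ) : ℕ → ℕ
  | 0 => 0
  | s + 1 => sInf {k | occPos ι j s < k ∧ ι k = j}

/-- The double-indexed coordinate form `x_{s,j}`, with the conventions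
`x_{s,0} = x_{s,n+1} = 0` and `x_{s,j} = 0` for `s ≤ 0`. -/
def xsj (ι : ℕ → ℕ) (n : ℕ) (s : ℤ) (j : ℕ) : ℕ → ℚ :=
  if 1 ≤ s ∧ 1 ≤ j ∧ j ≤ n then xc (occPos ι j s.toNat) else 0

/-- The double-indexed form `β_{s,j}`. -/
def betasj (A : ℕ → ℕ → ℤ) (ι : ℕ → ℕ) (s : ℤ) (j : ℕ) : ℕ → ℚ :=
  beta A ι (occPos ι j s.toNat)

/-- The double-indexed operator `S_{m,j}`. -/
def Ssj (A : ℕ → ℕ → ℤ) (ι : ℕ → ℕ) (m j : ℕ) (φ : ℕ → ℚ) : ℕ → ℚ :=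
  Sop A ι (occPos ι j m) φ

/- Entries of the ordered sets `J_X` are encoded as natural numbers:
an unbarred entry `j ∈ {1,…,n}` is encoded as `j`, a barred entry `j̄` is
encoded as `2n+1-j` (so that `n̄ = n+1, …, 1̄ = 2n` and the total order of
`J_B = J_C` is the numerical order), and the extra symbol `ovl(n+1)` of
types C and D is encoded as `0`. -/

/-- The box of type A. -/
def boxA (ι : ℕ → ℕ) (n : ℕ) (s : ℤ) (j : ℕ) : ℕ → ℚ :=
  xsj ι n (s + (PABC ι n j : ℤ)) j - xsj ι n (s + (PABC ι n (j - 1) : ℤ) + 1) (j - 1)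

/-- The box of type B. -/
def boxB (ι : ℕ → ℕ) (n : ℕ) (s : ℤ) (e : ℕ) : ℕ → ℚ :=
  if e ≤ n then
    xsj ι n (s + (PABC ι n e : ℤ)) e - xsj ι n (s + (PABC ι n (e - 1) : ℤ) + 1) (e - 1)
  else
    xsj ι n (s + (PABC ι n (2 * n - e) : ℤ) + (n : ℤ) - ((2 * n + 1 - e : ℕ) : ℤ) + 1)
        (2 * n - e)
      - xsj ι n (s + (PABC ι n (2 * n + 1 - e) : ℤ) + (n : ℤ) - ((2 * n + 1 - e : ℕ) : ℤ) + 1)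
          (2 * n + 1 - e)

/-- The box of type C (`ovl(n+1)` encoded as `0`). -/
def boxC (ι : ℕ → ℕ) (n : ℕ) (s : ℤ) (e : ℕ) : ℕ → ℚ :=
  if e = 0 then xsj ι n (s + (PABC ι n n : ℤ)) n
  else if e < n then
    xsj ι n (s + (PABC ι n e : ℤ)) e - xsj ι n (s + (PABC ι n (e - 1) : ℤ) + 1) (e - 1)
  else if e = n then
    (2 : ℚ) • xsj ι n (s + (PABC ι n n : ℤ)) n
      - xsj ι n (s + (PABC ι n (n - 1) : ℤ) + 1) (n - 1)
  else if e = n + 1 then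
    xsj ι n (s + (PABC ι n (n - 1) : ℤ) + 1) (n - 1)
      - (2 : ℚ) • xsj ι n (s + (PABC ι n n : ℤ) + 1) n
  else
    xsj ι n (s + (PABC ι n (2 * n - e) : ℤ) + (n : ℤ) - ((2 * n + 1 - e : ℕ) : ℤ) + 1)
        (2 * n - e)
      - xsj ι n (s + (PABC ι n (2 * n + 1 - e) : ℤ) + (n : ℤ) - ((2 * n + 1 - e : ℕ) : ℤ) + 1)
          (2 * n + 1 - e)

/-- The box of type D (`ovl(n+1)` encoded as `0`, `n̄` as `n+1`, `ovl(n-1)` as `n+2`). -/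
def boxD (ι : ℕ → ℕ) (n : ℕ) (s : ℤ) (e : ℕ) : ℕ → ℚ :=
  if e = 0 then xsj ι n (s + (PD ι n n : ℤ)) n
  else if e ≤ n - 2 then
    xsj ι n (s + (PD ι n e : ℤ)) e - xsj ι n (s + (PD ι n (e - 1) : ℤ) + 1) (e - 1)
  else if e = n - 1 then
    xsj ι n (s + (PD ι n (n - 1) : ℤ)) (n - 1) + xsj ι n (s + (PD ι n n : ℤ)) n
      - xsj ι n (s + (PD ι n (n - 2) : ℤ) + 1) (n - 2)
  else if e = n then
    xsj ι n (s + (PD ι n n : ℤ)) n - xsj ι n (s + (PD ι n (n - 1) : ℤ) + 1) (n - 1)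
  else if e = n + 1 then
    xsj ι n (s + (PD ι n (n - 1) : ℤ)) (n - 1) - xsj ι n (s + (PD ι n n : ℤ) + 1) n
  else if e = n + 2 then
    xsj ι n (s + (PD ι n (n - 2) : ℤ) + 1) (n - 2)
      - xsj ι n (s + (PD ι n (n - 1) : ℤ) + 1) (n - 1)
      - xsj ι n (s + (PD ι n n : ℤ) + 1) n
  else
    xsj ι n (s + (PD ι n (2 * n - e) : ℤ) + (n : ℤ) - ((2 * n + 1 - e : ℕ) : ℤ)) (2 * n - e)
      - xsj ι n (s + (PD ι n (2 * n + 1 - e) : ℤ) + (n : ℤ) - ((2 * n + 1 - e : ℕ) : ℤ))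
          (2 * n + 1 - e)

/-- The column tableau `[j_1,…,j_k]_s = Σ_{i=1}^k box_{s+k-i}(j_i)`. -/
def tab (box : ℤ → ℕ → ℕ → ℚ) (s : ℤ) (k : ℕ) (j : ℕ → ℕ) : ℕ → ℚ :=
  ∑ i ∈ Finset.Icc 1 k, box (s + (k : ℤ) - (i : ℤ)) (j i)

/-- The set `Tab_{A,ι}`. -/
def TabA (ι : ℕ → ℕ) (n : ℕ) : Set (ℕ → ℚ) :=
  { T | ∃ (k : ℕ) (s : ℤ) (j : ℕ → ℕ),
      1 ≤ k ∧ k ≤ n ∧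
      (∀ i, 1 ≤ i → i ≤ k → 1 ≤ j i ∧ j i ≤ n + 1) ∧
      (∀ i, 1 ≤ i → i < k → j i < j (i + 1)) ∧
      1 - (PABC ι n k : ℤ) ≤ s ∧
      T = tab (boxA ι n) s k j }

/-- `|·|` on encoded entries of `J_B = J_C`. -/
def absJ (n e : ℕ) : ℕ := if e ≤ n then e else 2 * n + 1 - e

/-- The set `Tab_{B,ι}`. -/
def TabB (ι : ℕ → ℕ) (n : ℕ) : Set (ℕ → ℚ) :=
  { T | ∃ (k : ℕ) (s : ℤ) (j : ℕ → ℕ),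
      1 ≤ k ∧ k ≤ n ∧
      (∀ i, 1 ≤ i → i ≤ k → 1 ≤ j i ∧ j i ≤ 2 * n) ∧
      (∀ i, 1 ≤ i → i < k → j i < j (i + 1)) ∧
      (k = n → ∀ l m, 1 ≤ l → l < m → m ≤ k → absJ n (j l) ≠ absJ n (j m)) ∧
      1 - (PABC ι n k : ℤ) ≤ s ∧
      T = tab (boxB ι n) s k j }

/-- Defining conditions of `Tab_{C,ι}` on the data `(k,s,j)`. -/
def TabCcond (ι : ℕ → ℕ) (n : ℕ) (k : ℕ) (s : ℤ) (j : ℕ → ℕ) : Prop :=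
  (1 ≤ k ∧ k ≤ n - 1 ∧
    (∀ i, 1 ≤ i → i ≤ k → 1 ≤ j i ∧ j i ≤ 2 * n) ∧
    (∀ i, 1 ≤ i → i < k → j i < j (i + 1)) ∧
    1 - (PABC ι n k : ℤ) ≤ s)
  ∨
  (j 1 = 0 ∧ 1 ≤ k ∧ k ≤ n + 1 ∧
    (∀ i, 2 ≤ i → i ≤ k → n + 1 ≤ j i ∧ j i ≤ 2 * n) ∧
    (∀ i, 2 ≤ i → i < k → j i < j (i + 1)) ∧
    1 - (PABC ι n n : ℤ) ≤ s)

/-- The set `Tab_{C,ι}`. -/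
def TabC (ι : ℕ → ℕ) (n : ℕ) : Set (ℕ → ℚ) :=
  { T | ∃ k s j, TabCcond ι n k s j ∧ T = tab (boxC ι n) s k j }

/-- The partial order on (encoded) `J_D`: `a ≤ b` iff `a = b`, or `a < b` numerically and
`(a,b)` is not the incomparable pair `(n, n̄)`. -/
def leD (n a b : ℕ) : Prop := a = b ∨ (a < b ∧ ¬(a = n ∧ b = n + 1))

/-- Defining conditions of `Tab_{D,ι}` on the data `(k,s,j)`. -/
def TabDcond (ι : ℕ → ℕ) (n : ℕ) (k : ℕ) (s : ℤ) (j : ℕ → ℕ) : Prop :=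
  (1 ≤ k ∧ k ≤ n - 2 ∧
    (∀ i, 1 ≤ i → i ≤ k → 1 ≤ j i ∧ j i ≤ 2 * n) ∧
    (∀ i, 1 ≤ i → i < k → ¬ leD n (j (i + 1)) (j i)) ∧
    1 - (PD ι n k : ℤ) ≤ s)
  ∨
  (j 1 = 0 ∧ 1 ≤ k ∧ k ≤ n + 1 ∧
    (∀ i, 2 ≤ i → i ≤ k → n + 1 ≤ j i ∧ j i ≤ 2 * n) ∧
    (∀ i, 2 ≤ i → i < k → j i < j (i + 1)) ∧
    (k % 2 = 0 → 1 - (PD ι n (n - 1) : ℤ) ≤ s) ∧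
    (k % 2 = 1 → 1 - (PD ι n n : ℤ) ≤ s))

/-- The set `Tab_{D,ι}`. -/
def TabD (ι : ℕ → ℕ) (n : ℕ) : Set (ℕ → ℚ) :=
  { T | ∃ k s j, TabDcond ι n k s j ∧ T = tab (boxD ι n) s k j }

end


section Positions

variable {n : ℕ} {ι : ℕ → ℕ}

theorem occ_succ (hadm : Admissible n ι) {j : ℕ} (h1 : 1 ≤ j) (h2 : j ≤ n) (s : ℕ) :
    occPos ι j s < occPos ι j (s + 1) ∧ ι (occPos ι j (s + 1)) = j := by
  have hne : {k | occPos ι j s < k ∧ ι k = j}.Nonempty := by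
    obtain ⟨k, hk, hk'⟩ := hadm.2.2 j h1 h2 (occPos ι j s + 1)
    exact ⟨k, hk, hk'⟩
  exact Nat.sInf_mem hne

theorem occ_between {j : ℕ} (s m : ℕ) (hm : occPos ι j s < m)
    (hm' : m < occPos ι j (s + 1)) : ι m ≠ j := by
  intro h
  have : occPos ι j (s + 1) ≤ m := Nat.sInf_le (s := {k | occPos ι j s < k ∧ ι k = j}) ⟨hm, h⟩
  omega

theorem occ_strictMono (hadm : Admissible n ι) {j : ℕ} (h1 : 1 ≤ j) (h2 : j ≤ n) :
    StrictMono (occPos ι j) :=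
  strictMono_nat_of_lt_succ fun s => (occ_succ hadm h1 h2 s).1

theorem occ_surj (hadm : Admissible n ι) {k : ℕ} (hk : 1 ≤ k) :
    ∃ s, occPos ι (ι k) (s + 1) = k := by
  obtain ⟨h1, h2⟩ := hadm.1 k hk
  have hsm := occ_strictMono hadm h1 h2
  have hex : ∃ s, k ≤ occPos ι (ι k) s := ⟨k, hsm.id_le k⟩
  classical
  have hf := Nat.find_spec hex
  have hmin := fun m => @Nat.find_min _ _ hex m
  generalize Nat.find hex = s at hf hmin
  cases s with
  | zero => simp [occPos] at hf; omega
  | succ s =>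
    refine ⟨s, ?_⟩
    have h3 := hmin s (by omega)
    by_contra hne
    exact occ_between (ι := ι) (j := ι k) s k (by omega) (by omega) rfl

theorem kplus_occ (hadm : Admissible n ι) {j : ℕ} (h1 : 1 ≤ j) (h2 : j ≤ n) (s : ℕ) :
    kplus ι (occPos ι j (s + 1)) = occPos ι j (s + 2) := by
  have h := (occ_succ hadm h1 h2 s).2
  conv_rhs => rw [occPos]
  rw [kplus, h]

theorem kminus_occ (hadm : Admissible n ι) {j : ℕ} (h1 : 1 ≤ j) (h2 : j ≤ n) (s : ℕ) :
    kminus ι (occPos ι j (s + 1)) = occPos ι j s := by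
  have h := (occ_succ hadm h1 h2 s).2
  have hsm := occ_strictMono hadm h1 h2
  rw [kminus, h]
  cases s with
  | zero =>
    have : {l | 0 < l ∧ l < occPos ι j (0 + 1) ∧ ι l = j} = ∅ := by
      ext l
      simp only [Set.mem_ofPred_eq, Set.mem_empty_iff_false, iff_false]
      rintro ⟨ha, hb, hc⟩
      exact occ_between (ι := ι) (j := j) 0 l (by simpa [occPos] using ha) hb hc
    rw [this]; simp [occPos]
  | succ s =>
    apply IsGreatest.csSup_eq
    refine ⟨⟨?_, hsm (by omega), (occ_succ hadm h1 h2 s).2⟩, ?_⟩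
    · have := (occ_succ hadm h1 h2 s).1; omega
    · rintro l ⟨ha, hb, hc⟩
      by_contra hlt
      exact occ_between (ι := ι) (j := j) (s + 1) l (by omega) hb hc

theorem occ_exists_between (hadm : Admissible n ι) (hadap : Adapted n (cartanB n) ι)
    {i j : ℕ} (hi1 : 1 ≤ i) (hi2 : i ≤ n) (hj1 : 1 ≤ j) (hj2 : j ≤ n)
    (hij : i ≠ j) (hA : cartanB n i j ≠ 0) (s : ℕ) :
    ∃ m, occPos ι i (s + 1) < occPos ι j (m + 1) ∧ occPos ι j (m + 1) < occPos ι i (s + 2) := by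
  by_contra hcon
  push Not at hcon
  have ha := occ_succ hadm hi1 hi2 s
  have hb := occ_succ hadm hi1 hi2 (s + 1)
  refine hadap i j hi1 hi2 hj1 hj2 hij hA (occPos ι i (s + 1)) (occPos ι i (s + 2))
    (by omega) hb.1 (Or.inl ha.2) (Or.inl hb.2) ?_ (ha.2.trans hb.2.symm)
  intro m hm hm'
  refine ⟨occ_between (s + 1) m hm hm', ?_⟩
  intro hj
  obtain ⟨t, ht⟩ := occ_surj hadm (k := m) (by omega)
  rw [hj] at ht
  have := hcon t (by omega)
  omega

theorem cartanB_adj {i j : ℕ} (h : i + 1 = j ∨ j + 1 = i) : cartanB n i j ≠ 0 := by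
  unfold cartanB
  split_ifs <;> simp_all

theorem occ_alt (hadm : Admissible n ι) (hadap : Adapted n (cartanB n) ι)
    {i j : ℕ} (hi1 : 1 ≤ i) (hi2 : i ≤ n) (hj1 : 1 ≤ j) (hj2 : j ≤ n)
    (hij : i + 1 = j ∨ j + 1 = i) (h0 : occPos ι i 1 < occPos ι j 1) (m : ℕ) :
    occPos ι j m < occPos ι i (m + 1) ∧ occPos ι i (m + 1) < occPos ι j (m + 1) := by
  have hsi := occ_strictMono hadm hi1 hi2
  have hsj := occ_strictMono hadm hj1 hj2
  induction m with
  | zero =>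
    refine ⟨?_, h0⟩
    have := (occ_succ hadm hi1 hi2 0).1
    simpa [occPos] using this
  | succ m ih =>
    have h1 : occPos ι j (m + 1) < occPos ι i (m + 2) := by
      obtain ⟨t, ht, ht'⟩ := occ_exists_between hadm hadap hi1 hi2 hj1 hj2 (by omega)
        (cartanB_adj hij) m
      have : m < t + 1 := hsj.lt_iff_lt.1 (by omega)
      have : occPos ι j (m + 1) ≤ occPos ι j (t + 1) := hsj.monotone (by omega)
      omega
    refine ⟨h1, ?_⟩
    obtain ⟨t, ht, ht'⟩ := occ_exists_between hadm hadap hj1 hj2 hi1 hi2 (by omega)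
        (cartanB_adj hij.symm) m
    have : m + 1 < t + 1 := hsi.lt_iff_lt.1 (by omega)
    have : occPos ι i (m + 2) ≤ occPos ι i (t + 1) := hsi.monotone (by omega)
    have e : m + 1 + 1 = m + 2 := rfl
    rw [e]
    omega

theorem firstOcc_eq (j : ℕ) : firstOcc ι j = occPos ι j 1 := rfl

theorem first_ne (hadm : Admissible n ι)
    {i j : ℕ} (hi1 : 1 ≤ i) (hi2 : i ≤ n) (hj1 : 1 ≤ j) (hj2 : j ≤ n) (hij : i ≠ j) :
    occPos ι i 1 ≠ occPos ι j 1 := by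
  intro h
  have a := (occ_succ hadm hi1 hi2 0).2
  have b := (occ_succ hadm hj1 hj2 0).2
  simp only [zero_add] at a b
  rw [h, b] at a
  exact hij a.symm

theorem pval_add (hadm : Admissible n ι)
    {i j : ℕ} (hi1 : 1 ≤ i) (hi2 : i ≤ n) (hj1 : 1 ≤ j) (hj2 : j ≤ n) (hij : i ≠ j) :
    pval ι i j + pval ι j i = 1 := by
  have := first_ne hadm hi1 hi2 hj1 hj2 hij
  unfold pval
  rw [firstOcc_eq, firstOcc_eq]
  split_ifs <;> omega

/-- the unique occurrence of a neighbour between two consecutive occurrences -/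
theorem occ_nbr (hadm : Admissible n ι) (hadap : Adapted n (cartanB n) ι)
    {i j : ℕ} (hi1 : 1 ≤ i) (hi2 : i ≤ n) (hj1 : 1 ≤ j) (hj2 : j ≤ n)
    (hij : i + 1 = j ∨ j + 1 = i) (s t : ℕ) :
    (occPos ι j (s + 1) < occPos ι i t ∧ occPos ι i t < occPos ι j (s + 2)) ↔
      t = s + 1 + pval ι i j := by
  have hsi := occ_strictMono hadm hi1 hi2
  have hsj := occ_strictMono hadm hj1 hj2
  have hne := first_ne hadm hi1 hi2 hj1 hj2 (by omega)
  unfold pval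
  rw [firstOcc_eq, firstOcc_eq]
  split_ifs with h
  · have a0 := occ_alt hadm hadap hi1 hi2 hj1 hj2 hij h s
    have a1 := occ_alt hadm hadap hi1 hi2 hj1 hj2 hij h (s + 1)
    have a2 := occ_alt hadm hadap hi1 hi2 hj1 hj2 hij h (s + 2)
    constructor
    · rintro ⟨ha, hb⟩
      have h1 : s + 1 < t := hsi.lt_iff_lt.1 (by omega)
      have h2 : t < s + 3 := hsi.lt_iff_lt.1 (lt_trans hb a2.1)
      omega
    · rintro rfl
      exact a1
  · have h' : occPos ι j 1 < occPos ι i 1 := by omega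
    have a0 := occ_alt hadm hadap hj1 hj2 hi1 hi2 hij.symm h' s
    have a1 := occ_alt hadm hadap hj1 hj2 hi1 hi2 hij.symm h' (s + 1)
    constructor
    · rintro ⟨ha, hb⟩
      have h1 : s < t := hsi.lt_iff_lt.1 (by omega)
      have h2 : t < s + 2 := hsi.lt_iff_lt.1 (lt_trans hb a1.2)
      omega
    · rintro rfl
      exact ⟨a0.2, a1.1⟩

theorem sum_nbr (hadm : Admissible n ι) (hadap : Adapted n (cartanB n) ι)
    {i j : ℕ} (hj1 : 1 ≤ j) (hj2 : j ≤ n)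
    (hij : i + 1 = j ∨ j + 1 = i) (s : ℕ) (c : ℚ) :
    (∑ l ∈ Finset.Ioo (occPos ι j (s + 1)) (occPos ι j (s + 2)),
      (if ι l = i then c • xc l else 0)) =
      if 1 ≤ i ∧ i ≤ n then c • xc (occPos ι i (s + 1 + pval ι i j)) else 0 := by
  split_ifs with hi
  · obtain ⟨hi1, hi2⟩ := hi
    rw [Finset.sum_eq_single (occPos ι i (s + 1 + pval ι i j))]
    · rw [if_pos]
      have := (occ_succ hadm hi1 hi2 (s + pval ι i j)).2
      rwa [show s + pval ι i j + 1 = s + 1 + pval ι i j by omega] at this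
    · intro l hl hne
      rw [Finset.mem_Ioo] at hl
      rw [if_neg]
      intro hli
      obtain ⟨t, ht⟩ := occ_surj hadm (k := l) (by omega)
      rw [hli] at ht
      rw [← ht] at hl hne
      exact hne (by rw [(occ_nbr hadm hadap hi1 hi2 hj1 hj2 hij s (t + 1)).1 hl])
    · intro hnot
      exact absurd (Finset.mem_Ioo.2
        ((occ_nbr hadm hadap hi1 hi2 hj1 hj2 hij s _).2 rfl)) hnot
  · apply Finset.sum_eq_zero
    intro l hl
    rw [Finset.mem_Ioo] at hl
    rw [if_neg]
    rintro rfl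
    exact hi (hadm.1 l (by omega))

theorem beta_occ (hadm : Admissible n ι) (hadap : Adapted n (cartanB n) ι)
    {j : ℕ} (hj1 : 1 ≤ j) (hj2 : j ≤ n) (s : ℕ) :
    beta (cartanB n) ι (occPos ι j (s + 1)) =
      xc (occPos ι j (s + 1))
      + ((if 1 ≤ j - 1 ∧ j - 1 ≤ n then
            (if j = n then (-2 : ℚ) else -1) • xc (occPos ι (j - 1) (s + 1 + pval ι (j - 1) j)) else 0)
        + (if 1 ≤ j + 1 ∧ j + 1 ≤ n then
            (-1 : ℚ) • xc (occPos ι (j + 1) (s + 1 + pval ι (j + 1) j)) else 0))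
      + xc (occPos ι j (s + 2)) := by
  have h := occ_succ hadm hj1 hj2 s
  rw [beta, if_neg (by omega), kplus_occ hadm hj1 hj2, h.2,
    ← sum_nbr hadm hadap (i := j - 1) hj1 hj2 (by omega), ← sum_nbr hadm hadap (i := j + 1) hj1 hj2 (by omega),
    ← Finset.sum_add_distrib]
  congr 2
  apply Finset.sum_congr rfl
  intro l hl
  rw [Finset.mem_Ioo] at hl
  have hne := occ_between (ι := ι) (j := j) (s + 1) l hl.1 hl.2
  by_cases h1 : ι l = j - 1
  · rw [if_pos h1, if_neg (show ¬ ι l = j + 1 by omega), add_zero, h1]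
    congr 1
    unfold cartanB
    rw [if_neg (by omega)]
    by_cases hjn : j = n
    · rw [if_pos (by omega), if_pos hjn]; norm_num
    · rw [if_neg (by omega), if_neg hjn, if_pos (by omega)]; norm_num
  · rw [if_neg h1, zero_add]
    have hcz : ¬ (j = n ∧ ι l = n - 1) := by omega
    by_cases h2 : ι l = j + 1
    · rw [if_pos h2, h2]
      congr 1
      unfold cartanB
      rw [if_neg (by omega), if_neg (by omega), if_pos (by omega)]; norm_num
    · rw [if_neg h2]
      unfold cartanB
      rw [if_neg (by omega), if_neg hcz, if_neg (by omega)]; norm_num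

end Positions

noncomputable section

/-- integer-indexed version of `P` -/
def Pz (ι : ℕ → ℕ) (n : ℕ) (j : ℤ) : ℤ := (PABC ι n j.toNat : ℤ)

/-- normalised coordinates -/
def yy (ι : ℕ → ℕ) (n : ℕ) (t j : ℤ) : ℕ → ℚ := xsj ι n (t + Pz ι n j) j.toNat

/-- position of a normalised coordinate -/
def pos (ι : ℕ → ℕ) (n : ℕ) (t j : ℤ) : ℕ := occPos ι j.toNat (t + Pz ι n j).toNat

/-- normalised `beta` -/
def bt (ι : ℕ → ℕ) (n : ℕ) (t j : ℤ) : ℕ → ℚ :=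
  yy ι n t j + yy ι n (t + 1) j
    + (if j = n then (-2 : ℚ) else -1) • yy ι n (t + 1) (j - 1) - yy ι n t (j + 1)

/-- normalised boxes -/
def bx (ι : ℕ → ℕ) (n : ℕ) (s v : ℤ) : ℕ → ℚ :=
  if v ≤ n then yy ι n s v - yy ι n (s + 1) (v - 1)
  else yy ι n (s + v - n) (2 * n - v) - yy ι n (s + v - n) (2 * n + 1 - v)

end

section Normalised

variable {n : ℕ} {ι : ℕ → ℕ}

theorem PABC_succ {j : ℕ} (h1 : 1 ≤ j) (h2 : j + 1 ≤ n) :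
    PABC ι n (j + 1) = PABC ι n j + pval ι (j + 1) j := by
  unfold PABC
  rw [if_pos h2, if_pos (by omega), Finset.sum_Icc_succ_top (by omega)]
  simp

theorem pval_le (i j : ℕ) : pval ι i j ≤ 1 := by
  unfold pval; split_ifs <;> omega

theorem PABC_zero : PABC ι n 0 = 0 := by
  simp [PABC]

theorem PABC_one : PABC ι n 1 = 0 := by
  simp [PABC]

theorem PABC_step {j : ℕ} (h2 : j + 1 ≤ n) :
    PABC ι n j ≤ PABC ι n (j + 1) ∧ PABC ι n (j + 1) ≤ PABC ι n j + 1 := by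
  rcases Nat.eq_zero_or_pos j with rfl | h
  · simp [PABC_zero, PABC_one]
  · have := pval_le (ι := ι) (j + 1) j
    rw [PABC_succ h h2]; omega

theorem PABC_add (j d : ℕ) (h2 : j + d ≤ n) :
    PABC ι n j ≤ PABC ι n (j + d) ∧ PABC ι n (j + d) ≤ PABC ι n j + d := by
  induction d with
  | zero => simp
  | succ d ih =>
    have h := PABC_step (ι := ι) (n := n) (j := j + d) (by omega)
    have := ih (by omega)
    rw [← add_assoc]; omega

theorem Pz_le {i j : ℤ} (h0 : 0 ≤ i) (h1 : i ≤ j) (h2 : j ≤ n) :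
    Pz ι n i ≤ Pz ι n j ∧ Pz ι n j ≤ Pz ι n i + (j - i) := by
  have := PABC_add (ι := ι) (n := n) i.toNat (j - i).toNat (by omega)
  rw [show i.toNat + (j - i).toNat = j.toNat by omega] at this
  unfold Pz
  omega

theorem yy_zero (t : ℤ) : yy ι n t 0 = 0 := by
  simp [yy, xsj]

theorem yy_top (t : ℤ) : yy ι n t (n + 1) = 0 := by
  unfold yy xsj
  rw [if_neg]; omega

theorem yy_eq {t j : ℤ} (h1 : 1 ≤ j) (h2 : j ≤ n) (ht : 1 ≤ t + Pz ι n j) :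
    yy ι n t j = xc (pos ι n t j) := by
  unfold yy xsj pos
  rw [if_pos (by omega)]

theorem pos_pos (hadm : Admissible n ι) {t j : ℤ} (h1 : 1 ≤ j) (h2 : j ≤ n)
    (ht : 1 ≤ t + Pz ι n j) : 1 ≤ pos ι n t j := by
  unfold pos
  obtain ⟨s, hs⟩ : ∃ s : ℕ, (t + Pz ι n j).toNat = s + 1 := ⟨(t + Pz ι n j).toNat - 1, by omega⟩
  rw [hs]
  have := (occ_succ hadm (j := j.toNat) (by omega) (by omega) s).1
  omega

theorem yy_val (hadm : Admissible n ι) {t j t' j' : ℤ} (h1 : 1 ≤ j) (h2 : j ≤ n)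
    (ht : 1 ≤ t + Pz ι n j) (h0 : 0 ≤ j') (hn : j' ≤ n) :
    yy ι n t' j' (pos ι n t j) = if t' = t ∧ j' = j then 1 else 0 := by
  unfold yy xsj
  split_ifs with ha hb hb
  · obtain ⟨rfl, rfl⟩ := hb
    simp [xc, pos]
  · simp only [xc]
    rw [if_neg]
    intro heq
    unfold pos at heq
    obtain ⟨s, hs⟩ : ∃ s : ℕ, (t + Pz ι n j).toNat = s + 1 :=
      ⟨(t + Pz ι n j).toNat - 1, by omega⟩
    obtain ⟨s', hs'⟩ : ∃ s' : ℕ, (t' + Pz ι n j').toNat = s' + 1 :=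
      ⟨(t' + Pz ι n j').toNat - 1, by omega⟩
    rw [hs, hs'] at heq
    have e1 := (occ_succ hadm (j := j.toNat) (by omega) (by omega) s).2
    have e2 := (occ_succ hadm (j := j'.toNat) (by omega) (by omega) s').2
    rw [heq, e2] at e1
    have e3 : j' = j := by omega
    subst e3
    have := (occ_strictMono hadm (j := j'.toNat) (by omega) (by omega)).injective heq
    apply hb
    omega
  · obtain ⟨rfl, rfl⟩ := hb
    omega
  · rfl

theorem beta_pos (hadm : Admissible n ι) (hadap : Adapted n (cartanB n) ι)
    {t j : ℤ} (h1 : 1 ≤ j) (h2 : j ≤ n) (ht : 1 ≤ t + Pz ι n j) :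
    beta (cartanB n) ι (pos ι n t j) = bt ι n t j := by
  lift j to ℕ using (by omega)
  obtain ⟨s, hs⟩ : ∃ s : ℕ, t + Pz ι n j = s + 1 :=
      ⟨(t + Pz ι n j).toNat - 1, by omega⟩
  have hp : pos ι n t j = occPos ι j (s + 1) := by
    unfold pos
    rw [hs]; simp
  rw [hp, beta_occ hadm hadap (by omega) (by omega)]
  unfold bt
  have hPj : Pz ι n j = PABC ι n j := by simp [Pz]
  have e1 : yy ι n t j = xc (occPos ι j (s + 1)) := by
    rw [yy_eq h1 h2 ht, hp]
  have e2 : yy ι n (t + 1) j = xc (occPos ι j (s + 2)) := by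
    rw [yy_eq h1 h2 (by omega)]
    unfold pos
    congr 2; omega
  have e3 : yy ι n (t + 1) (j - 1) = if 1 ≤ j - 1 ∧ j - 1 ≤ n then
      xc (occPos ι (j - 1) (s + 1 + pval ι (j - 1) j)) else 0 := by
    split_ifs with h
    · have hP : PABC ι n j = PABC ι n (j - 1) + pval ι j (j - 1) := by
        have := PABC_succ (ι := ι) (n := n) (j := j - 1) (by omega) (by omega)
        rwa [show j - 1 + 1 = j by omega] at this
      have hpv := pval_add hadm (i := j - 1) (j := j) (by omega) (by omega) (by omega)
        (by omega) (by omega)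
      have ej : ((j : ℤ) - 1).toNat = j - 1 := by omega
      have hP' : Pz ι n ((j : ℤ) - 1) = PABC ι n (j - 1) := by simp [Pz]
      rw [yy_eq (by omega) (by omega) (by omega)]
      unfold pos
      rw [ej]
      congr 2; omega
    · have : (j : ℤ) - 1 = 0 := by omega
      rw [this, yy_zero]
  have e4 : yy ι n t (j + 1) = if 1 ≤ j + 1 ∧ j + 1 ≤ n then
      xc (occPos ι (j + 1) (s + 1 + pval ι (j + 1) j)) else 0 := by
    split_ifs with h
    · have hP := PABC_succ (ι := ι) (n := n) (j := j) (by omega) (by omega)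
      have ej : ((j : ℤ) + 1).toNat = j + 1 := by omega
      have hP' : Pz ι n ((j : ℤ) + 1) = PABC ι n (j + 1) := by rw [Pz, ej]
      rw [yy_eq (by omega) (by omega) (by omega)]
      unfold pos
      rw [ej]
      congr 2; omega
    · have : (j : ℤ) + 1 = n + 1 := by omega
      rw [this, yy_top]
  rw [e1, e2, e3, e4]
  have ejn : ((j : ℤ) = (n : ℤ)) ↔ j = n := by omega
  simp only [ejn]
  split_ifs <;> module

theorem pos_surj (hadm : Admissible n ι) {k : ℕ} (hk : 1 ≤ k) :
    ∃ t j : ℤ, 1 ≤ j ∧ j ≤ n ∧ 1 ≤ t + Pz ι n j ∧ k = pos ι n t j := by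
  obtain ⟨s, hs⟩ := occ_surj hadm hk
  obtain ⟨h1, h2⟩ := hadm.1 k hk
  refine ⟨(s + 1 : ℤ) - Pz ι n (ι k), ι k, by omega, by omega, by omega, ?_⟩
  unfold pos
  rw [show ((s + 1 : ℤ) - Pz ι n (ι k) + Pz ι n (ι k)).toNat = s + 1 by omega]
  simp [hs]

theorem Sop_pos (hadm : Admissible n ι) (hadap : Adapted n (cartanB n) ι)
    {t j : ℤ} (h1 : 1 ≤ j) (h2 : j ≤ n) (ht : 1 ≤ t + Pz ι n j) (φ : ℕ → ℚ)
    (hφ : 0 < φ (pos ι n t j)) :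
    Sop (cartanB n) ι (pos ι n t j) φ = φ - φ (pos ι n t j) • bt ι n t j := by
  rw [Sop, if_pos hφ, beta_pos hadm hadap h1 h2 ht]

theorem Sop_neg (hadm : Admissible n ι) (hadap : Adapted n (cartanB n) ι)
    {t j : ℤ} (h1 : 1 ≤ j) (h2 : j ≤ n) (ht : 1 ≤ t + Pz ι n j) (φ : ℕ → ℚ)
    (hφ : ¬ 0 < φ (pos ι n t j)) :
    Sop (cartanB n) ι (pos ι n t j) φ =
      φ - φ (pos ι n t j) • (if 1 ≤ t - 1 + Pz ι n j then bt ι n (t - 1) j else 0) := by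
  have hk : kminus ι (pos ι n t j) = occPos ι j.toNat ((t + Pz ι n j).toNat - 1) := by
    obtain ⟨s, hs⟩ : ∃ s : ℕ, (t + Pz ι n j).toNat = s + 1 :=
      ⟨(t + Pz ι n j).toNat - 1, by omega⟩
    unfold pos
    rw [hs, kminus_occ hadm (by omega) (by omega)]
    simp
  rw [Sop, if_neg hφ, hk]
  congr 2
  split_ifs with h
  · rw [← beta_pos hadm hadap h1 h2 h]
    unfold pos
    congr 2; omega
  · rw [show (t + Pz ι n j).toNat - 1 = 0 by omega]
    simp [occPos, beta]

theorem boxB_eq (s : ℤ) (e : ℕ) (h1 : 1 ≤ e) (h2 : e ≤ 2 * n) :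
    boxB ι n s e = bx ι n s e := by
  unfold boxB bx yy Pz
  split_ifs with ha hb hb
  · congr 1
    rw [show ((e : ℤ) - 1).toNat = e - 1 by omega]
    congr 1
    ring
  · omega
  · omega
  · rw [show (2 * (n : ℤ) - e).toNat = 2 * n - e by omega,
      show (2 * (n : ℤ) + 1 - e).toNat = 2 * n + 1 - e by omega]
    congr 2 <;> omega

/-- lowering a box -/
theorem bx_low_small (s v : ℤ) (h2 : v < n) :
    bx ι n s (v + 1) = bx ι n s v - bt ι n s v := by
  unfold bx bt
  rw [if_pos (by omega), if_pos (by omega), if_neg (by omega)]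
  rw [show v + 1 - 1 = v by ring]
  module

theorem bx_low_mid (s : ℤ) :
    bx ι n s (n + 1) = bx ι n s n - bt ι n s n := by
  unfold bx bt
  rw [if_neg (by omega), if_pos (by omega), if_pos rfl, yy_top]
  rw [show s + (n + 1 : ℤ) - n = s + 1 by ring, show 2 * (n : ℤ) - (n + 1) = n - 1 by ring,
    show 2 * (n : ℤ) + 1 - (n + 1) = n by ring]
  module

theorem bx_low_big (s j : ℤ) (h1 : j < n) :
    bx ι n s (2 * n + 1 - j) = bx ι n s (2 * n - j) - bt ι n (s + n - j) j := by
  unfold bx bt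
  rw [if_neg (by omega), if_neg (by omega), if_neg (by omega)]
  rw [show s + (2 * n + 1 - j : ℤ) - n = s + n - j + 1 by ring,
    show 2 * (n : ℤ) - (2 * n + 1 - j) = j - 1 by ring,
    show 2 * (n : ℤ) + 1 - (2 * n + 1 - j) = j by ring,
    show s + (2 * n - j : ℤ) - n = s + n - j by ring,
    show 2 * (n : ℤ) - (2 * n - j) = j by ring,
    show 2 * (n : ℤ) + 1 - (2 * n - j) = j + 1 by ring]
  module

/-- the flip identity -/
theorem bx_flip (s s' j : ℤ) (h1 : j < n) (hs : s' = s - n + j) :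
    bx ι n s (j + 1) + bx ι n s' (2 * n - j) = bx ι n s j + bx ι n s' (2 * n + 1 - j) := by
  rw [bx_low_small s j h1, bx_low_big s' j h1, hs, show s - n + j + n - j = s by ring]
  module

theorem bx_val (hadm : Admissible n ι) {t j : ℤ} (h1 : 1 ≤ j) (h2 : j < n)
    (ht : 1 ≤ t + Pz ι n j) (l v : ℤ) (hv : 1 ≤ v) (hv' : v ≤ 2 * n) :
    bx ι n l v (pos ι n t j) =
      (if v = j ∧ l = t then 1 else 0) - (if v = j + 1 ∧ l = t - 1 then 1 else 0)
      + (if v = 2 * n - j ∧ l = t - n + j then 1 else 0)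
      - (if v = 2 * n + 1 - j ∧ l = t - n + j - 1 then 1 else 0) := by
  unfold bx
  split_ifs <;> simp only [Pi.sub_apply] <;>
    rw [yy_val hadm h1 h2.le ht (by omega) (by omega),
      yy_val hadm h1 h2.le ht (by omega) (by omega)] <;> split_ifs <;> first | omega | norm_num

theorem bx_val_n (hadm : Admissible n ι) (hn : 2 ≤ n) {t : ℤ}
    (ht : 1 ≤ t + Pz ι n n) (l v : ℤ) (hv : 1 ≤ v) (hv' : v ≤ 2 * n) :
    bx ι n l v (pos ι n t n) =
      (if v = n ∧ l = t then 1 else 0) - (if v = n + 1 ∧ l = t - 1 then 1 else 0) := by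
  unfold bx
  split_ifs <;> simp only [Pi.sub_apply] <;>
    rw [yy_val hadm (by omega) le_rfl ht (by omega) (by omega),
      yy_val hadm (by omega) le_rfl ht (by omega) (by omega)] <;>
      split_ifs <;> first | omega | norm_num

end Normalised

noncomputable section

/-- the linear form of a column -/
def TF (ι : ℕ → ℕ) (n : ℕ) (s k : ℤ) (E : ℤ → ℤ) : ℕ → ℚ :=
  ∑ r ∈ Finset.Icc (1 : ℤ) k, bx ι n (s + k - r) (E r)

/-- columns, extended to strictly increasing functions on all integers -/
structure Good0 (n : ℕ) (k : ℤ) (E : ℤ → ℤ) : Prop where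
  hk1 : 1 ≤ k
  hk2 : k ≤ n
  mono : ∀ a b, a < b → E a < E b
  lo : ∀ r, r ≤ 0 → E r ≤ 0
  hi : ∀ r, k < r → 2 * n < E r
  rng : ∀ r, 1 ≤ r → r ≤ k → 1 ≤ E r ∧ E r ≤ 2 * n

/-- distinctness of absolute values in full columns -/
def DC (n : ℕ) (k : ℤ) (E : ℤ → ℤ) : Prop :=
  k = n → ∀ a b, 1 ≤ E a → E a ≤ 2 * n → E a + E b ≠ 2 * n + 1

/-- measure used in the induction -/
def mm (n : ℕ) (v : ℤ) : ℤ := if v ≤ n then 3 * v else v + 2 * n + 1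

/-- measure used in the induction -/
def MM (n : ℕ) (k : ℤ) (E : ℤ → ℤ) : ℤ := ∑ r ∈ Finset.Icc (1 : ℤ) k, mm n (E r)

/-- normalised version of `TabB` -/
def InT (ι : ℕ → ℕ) (n : ℕ) (T : ℕ → ℚ) : Prop :=
  ∃ (k s : ℤ) (E : ℤ → ℤ), Good0 n k E ∧ DC n k E ∧ 1 - Pz ι n k ≤ s ∧ T = TF ι n s k E

end

section Columns

variable {n : ℕ} {ι : ℕ → ℕ} {s k : ℤ} {E : ℤ → ℤ}

theorem sum_update {M : Type*} [AddCommGroup M] (f : ℤ → ℤ → M) (E : ℤ → ℤ) (r w : ℤ)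
    (h1 : 1 ≤ r) (h2 : r ≤ k) :
    ∑ x ∈ Finset.Icc (1 : ℤ) k, f x (Function.update E r w x) =
      (∑ x ∈ Finset.Icc (1 : ℤ) k, f x (E x)) + (f r w - f r (E r)) := by
  have hr : r ∈ Finset.Icc (1 : ℤ) k := Finset.mem_Icc.2 ⟨h1, h2⟩
  rw [← Finset.add_sum_erase _ _ hr, ← Finset.add_sum_erase _ (fun x => f x (E x)) hr]
  have : ∑ x ∈ (Finset.Icc (1 : ℤ) k).erase r, f x (Function.update E r w x) =
      ∑ x ∈ (Finset.Icc (1 : ℤ) k).erase r, f x (E x) := by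
    apply Finset.sum_congr rfl
    intro x hx
    rw [Function.update_of_ne (Finset.ne_of_mem_erase hx)]
  rw [this, Function.update_self]
  abel

theorem TF_update (E : ℤ → ℤ) (r w : ℤ) (h1 : 1 ≤ r) (h2 : r ≤ k) :
    TF ι n s k (Function.update E r w) =
      TF ι n s k E + (bx ι n (s + k - r) w - bx ι n (s + k - r) (E r)) :=
  sum_update (fun x v => bx ι n (s + k - x) v) E r w h1 h2

theorem MM_update (E : ℤ → ℤ) (r w : ℤ) (h1 : 1 ≤ r) (h2 : r ≤ k) :
    MM n k (Function.update E r w) = MM n k E + (mm n w - mm n (E r)) :=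
  sum_update (fun _ v => mm n v) E r w h1 h2

theorem MM_nonneg (h : Good0 n k E) : 0 ≤ MM n k E := by
  apply Finset.sum_nonneg
  intro r hr
  rw [Finset.mem_Icc] at hr
  have := h.rng r hr.1 hr.2
  unfold mm
  split_ifs <;> omega

theorem Good0.inj (h : Good0 n k E) {a b : ℤ} (hab : E a = E b) : a = b := by
  rcases lt_trichotomy a b with h1 | h1 | h1
  · have := h.mono _ _ h1; omega
  · exact h1
  · have := h.mono _ _ h1; omega

theorem Good0.le (h : Good0 n k E) {a b : ℤ} (hab : a ≤ b) : E a ≤ E b := by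
  rcases hab.lt_or_eq with h1 | h1
  · exact (h.mono _ _ h1).le
  · rw [h1]

theorem Good0.lt_of (h : Good0 n k E) {a b : ℤ} (hab : E a < E b) : a < b := by
  by_contra hc
  have := h.le (a := b) (b := a) (by omega)
  omega

theorem Good0.row (h : Good0 n k E) {r v : ℤ} (hr : E r = v) (h1 : 1 ≤ v) (h2 : v ≤ 2 * n) :
    1 ≤ r ∧ r ≤ k := by
  constructor
  · by_contra hc
    have := h.lo r (by omega); omega
  · by_contra hc
    have := h.hi r (by omega); omega

theorem Good0.set (h : Good0 n k E) {r w : ℤ} (hr : 1 ≤ r) (hr' : r ≤ k)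
    (h1 : E (r - 1) < w) (h2 : w < E (r + 1)) (h3 : 1 ≤ w) (h4 : w ≤ 2 * n) :
    Good0 n k (Function.update E r w) := by
  refine ⟨h.hk1, h.hk2, ?_, ?_, ?_, ?_⟩
  · intro a b hab
    have := h.mono a b hab
    have e1 : r < b → E (r + 1) ≤ E b := fun hh => h.le (by omega)
    have e2 : a < r → E a ≤ E (r - 1) := fun hh => h.le (by omega)
    simp only [Function.update_apply]
    split_ifs with ha hb hb
    · omega
    · have := e1 (by omega); omega
    · have := e2 (by omega); omega
    · exact this
  · intro a ha
    rw [Function.update_of_ne (by omega)]; exact h.lo a ha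
  · intro a ha
    rw [Function.update_of_ne (by omega)]; exact h.hi a ha
  · intro a ha ha'
    have := h.rng a ha ha'
    simp only [Function.update_apply]
    split_ifs <;> omega

theorem sum_ind (h : Good0 n k E) (v t : ℤ) (hv : 1 ≤ v) (hv' : v ≤ 2 * n) :
    (∑ r ∈ Finset.Icc (1 : ℤ) k, (if E r = v ∧ s + k - r = t then (1 : ℚ) else 0)) =
      if E (s + k - t) = v then 1 else 0 := by
  split_ifs with hE
  · have := h.row hE hv hv'
    rw [Finset.sum_eq_single (s + k - t)]
    · rw [if_pos ⟨hE, by omega⟩]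
    · intro b _ hb
      rw [if_neg]; omega
    · intro hh
      exact absurd (Finset.mem_Icc.2 this) hh
  · apply Finset.sum_eq_zero
    intro r _
    rw [if_neg]
    rintro ⟨ha, hb⟩
    apply hE
    rw [← ha]; congr 1; omega

theorem TF_val (hadm : Admissible n ι) (h : Good0 n k E) {t j i : ℤ} (h1 : 1 ≤ j) (h2 : j < n)
    (ht : 1 ≤ t + Pz ι n j) (hi : t = s + k - i) :
    TF ι n s k E (pos ι n t j) =
      (if E i = j then 1 else 0) - (if E (i + 1) = j + 1 then 1 else 0)
      + (if E (i + n - j) = 2 * n - j then 1 else 0)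
      - (if E (i + n - j + 1) = 2 * n + 1 - j then 1 else 0) := by
  unfold TF
  rw [Finset.sum_apply]
  have this := fun (r : ℤ) (hr : r ∈ Finset.Icc (1 : ℤ) k) =>
    bx_val hadm h1 h2 ht (s + k - r) (E r)
      (h.rng r (Finset.mem_Icc.1 hr).1 (Finset.mem_Icc.1 hr).2).1
      (h.rng r (Finset.mem_Icc.1 hr).1 (Finset.mem_Icc.1 hr).2).2
  rw [Finset.sum_congr rfl this, Finset.sum_sub_distrib, Finset.sum_add_distrib,
    Finset.sum_sub_distrib, sum_ind h _ _ (by omega) (by omega),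
    sum_ind h _ _ (by omega) (by omega), sum_ind h _ _ (by omega) (by omega),
    sum_ind h _ _ (by omega) (by omega), hi,
    show s + k - (s + k - i) = i by ring, show s + k - (s + k - i - 1) = i + 1 by ring,
    show s + k - (s + k - i - n + j) = i + n - j by ring,
    show s + k - (s + k - i - n + j - 1) = i + n - j + 1 by ring]

theorem TF_val_n (hadm : Admissible n ι) (hn : 2 ≤ n) (h : Good0 n k E) {t i : ℤ}
    (ht : 1 ≤ t + Pz ι n n) (hi : t = s + k - i) :
    TF ι n s k E (pos ι n t n) =
      (if E i = n then 1 else 0) - (if E (i + 1) = n + 1 then 1 else 0) := by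
  unfold TF
  rw [Finset.sum_apply]
  have this := fun (r : ℤ) (hr : r ∈ Finset.Icc (1 : ℤ) k) =>
    bx_val_n hadm hn ht (s + k - r) (E r)
      (h.rng r (Finset.mem_Icc.1 hr).1 (Finset.mem_Icc.1 hr).2).1
      (h.rng r (Finset.mem_Icc.1 hr).1 (Finset.mem_Icc.1 hr).2).2
  rw [Finset.sum_congr rfl this, 
    Finset.sum_sub_distrib, sum_ind h _ _ (by omega) (by omega),
    sum_ind h _ _ (by omega) (by omega), hi,
    show s + k - (s + k - i) = i by ring, show s + k - (s + k - i - 1) = i + 1 by ring]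

/-- in a full column every absolute value occurs -/
theorem value_or (h : Good0 n k E) (hD : DC n k E) (hk : k = n) {v : ℤ} (h1 : 1 ≤ v)
    (h2 : v ≤ n) : ∃ r, E r = v ∨ E r = 2 * n + 1 - v := by
  classical
  have hmaps : ∀ r ∈ Finset.Icc (1 : ℤ) k,
      (if E r ≤ n then E r else 2 * n + 1 - E r) ∈ Finset.Icc (1 : ℤ) n := by
    intro r hr
    rw [Finset.mem_Icc] at hr ⊢
    have := h.rng r hr.1 hr.2
    split_ifs <;> omega
  have hinj : Set.InjOn (fun r => if E r ≤ n then E r else 2 * n + 1 - E r)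
      (Finset.Icc (1 : ℤ) k : Finset ℤ) := by
    intro a ha b hb hab
    rw [Finset.mem_coe, Finset.mem_Icc] at ha hb
    have hra := h.rng a ha.1 ha.2
    have hrb := h.rng b hb.1 hb.2
    have hd := hD hk a b hra.1 hra.2
    apply h.inj
    dsimp only at hab
    split_ifs at hab <;> omega
  have hsurj := Finset.surjOn_of_injOn_of_card_le _ hmaps hinj (by rw [hk])
  obtain ⟨r, _, hr⟩ := hsurj (Finset.mem_coe.2 (Finset.mem_Icc.2 ⟨h1, h2⟩))
  refine ⟨r, ?_⟩
  dsimp only at hr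
  split_ifs at hr <;> omega

theorem mirror (h : Good0 n k E) (hD : DC n k E) (hk : k = n) (d : ℕ) (hd : d ≤ n) (r : ℤ)
    (h1 : E r ≤ n - d) (h2 : n - d < E (r + 1)) :
    E (r + d) ≤ n + d ∧ n + d < E (r + d + 1) := by
  induction d generalizing r with
  | zero => simp_all
  | succ d ih =>
    push_cast at h1 h2 ⊢
    by_cases hE : E (r + 1) = n - d
    · have h3 := ih (by omega) (r + 1) (by omega) (by
        have := h.mono (r + 1) (r + 1 + 1) (by omega); omega)
      rw [show r + 1 + (d : ℤ) = r + (d + 1) by ring] at h3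
      have h4 := hD hk (r + 1) (r + (d + 1) + 1) (by omega) (by omega)
      omega
    · have h3 := ih (by omega) r (by omega) (by omega)
      obtain ⟨q, hq⟩ := value_or h hD hk (v := n - d) (by omega) (by omega)
      rw [show r + (d + 1 : ℤ) = r + d + 1 by ring]
      have h4 := h.mono (r + d + 1) (r + d + 1 + 1) (by omega)
      rcases hq with hq | hq
      · have a1 := h.lt_of (a := r) (b := q) (by omega)
        have a2 := h.lt_of (a := q) (b := r + 1) (by omega)
        omega
      · have a1 := h.lt_of (a := r + d) (b := q) (by omega)
        have a2 := h.le (a := r + d + 1) (b := q) (by omega)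
        omega

theorem mirror' (h : Good0 n k E) (hD : DC n k E) (hk : k = n) {j : ℤ} (hj0 : 0 ≤ j) (hj : j ≤ n)
    (r : ℤ) (h1 : E r ≤ j) (h2 : j < E (r + 1)) :
    E (r + n - j) ≤ 2 * n - j ∧ 2 * n - j < E (r + n - j + 1) := by
  have := mirror h hD hk (n - j).toNat (by omega) r (by omega) (by omega)
  rw [show r + ((n - j).toNat : ℤ) = r + n - j by omega] at this
  omega

theorem pairP1 (h : Good0 n k E) (hD : DC n k E) (hk : k = n) {j r : ℤ} (hj0 : 1 ≤ j) (hj : j < n)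
    (ha : E r = j) (hb : E (r + 1) ≠ j + 1) :
    E (r + n - j) = 2 * n - j ∧ E (r + n - j + 1) ≠ 2 * n + 1 - j := by
  have h1 := h.mono r (r + 1) (by omega)
  have h2 := mirror' h hD hk (by omega) hj.le r ha.le (by omega)
  have h3 := hD hk r (r + n - j + 1) (by omega) (by omega)
  refine ⟨?_, by omega⟩
  obtain ⟨q, hq⟩ := value_or h hD hk (v := j + 1) (by omega) (by omega)
  rcases hq with hq | hq
  · have a1 := h.lt_of (a := r) (b := q) (by omega)
    have a2 := h.lt_of (a := q) (b := r + 1) (by omega)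
    omega
  · have h4 := mirror' h hD hk (j := j + 1) (by omega) (by omega) r (by omega) (by omega)
    rw [show r + n - (j + 1) + 1 = r + n - j by ring] at h4
    omega

theorem pairP2 (h : Good0 n k E) (hD : DC n k E) (hk : k = n) {j r : ℤ} (hj0 : 1 ≤ j) (hj : j < n)
    (hc : E (r + n - j) = 2 * n - j) (hd : E (r + n - j + 1) ≠ 2 * n + 1 - j) :
    E r = j ∧ E (r + 1) ≠ j + 1 := by
  have h1 := h.mono (r + n - j) (r + n - j + 1) (by omega)
  have h3 := hD hk (r + n - j) (r + 1) (by omega) (by omega)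
  refine ⟨?_, by omega⟩
  obtain ⟨q, hq⟩ := value_or h hD hk (v := j) (by omega) (by omega)
  rcases hq with hq | hq
  · have h2 := mirror' h hD hk (by omega) hj.le q hq.le
      (by have := h.mono q (q + 1) (by omega); omega)
    have a1 := h.lt_of (a := q + n - j) (b := r + n - j + 1) (by omega)
    have a2 := h.lt_of (a := r + n - j) (b := q + n - j + 1) (by omega)
    rw [show r = q by omega]; exact hq
  · have a1 := h.lt_of (a := r + n - j) (b := q) (by omega)
    have a2 := h.lt_of (a := q) (b := r + n - j + 1) (by omega)
    omega

theorem pairN1 (h : Good0 n k E) (hD : DC n k E) (hk : k = n) {j r : ℤ} (hj0 : 1 ≤ j) (hj : j < n)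
    (ha : E r ≠ j) (hb : E (r + 1) = j + 1) :
    E (r + n - j) ≠ 2 * n - j ∧ E (r + n - j + 1) = 2 * n + 1 - j := by
  have h1 := h.mono r (r + 1) (by omega)
  have h2 := mirror' h hD hk (by omega) hj.le r (by omega) (by omega)
  have h3 := hD hk (r + 1) (r + n - j) (by omega) (by omega)
  refine ⟨by omega, ?_⟩
  obtain ⟨q, hq⟩ := value_or h hD hk (v := j) (by omega) (by omega)
  rcases hq with hq | hq
  · have a1 := h.lt_of (a := r) (b := q) (by omega)
    have a2 := h.lt_of (a := q) (b := r + 1) (by omega)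
    omega
  · have a1 := h.lt_of (a := r + n - j) (b := q) (by omega)
    have a2 := h.le (a := r + n - j + 1) (b := q) (by omega)
    omega

theorem pairN2 (h : Good0 n k E) (hD : DC n k E) (hk : k = n) {j r : ℤ} (hj0 : 1 ≤ j) (hj : j < n)
    (hc : E (r + n - j) ≠ 2 * n - j) (hd : E (r + n - j + 1) = 2 * n + 1 - j) :
    E r ≠ j ∧ E (r + 1) = j + 1 := by
  have h1 := h.mono (r + n - j) (r + n - j + 1) (by omega)
  have h3 := hD hk (r + n - j + 1) r (by omega) (by omega)
  refine ⟨by omega, ?_⟩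
  obtain ⟨q, hq⟩ := value_or h hD hk (v := j + 1) (by omega) (by omega)
  rcases hq with hq | hq
  · have h2 := mirror' h hD hk (j := j) (by omega) hj.le (q - 1)
      (by have := h.mono (q - 1) q (by omega); omega) (by rw [sub_add_cancel]; omega)
    have a1 := h.lt_of (a := q - 1 + n - j) (b := r + n - j + 1) (by omega)
    have a2 := h.lt_of (a := r + n - j) (b := q - 1 + n - j + 1) (by omega)
    rw [show r + 1 = q by omega]; exact hq
  · have a1 := h.lt_of (a := r + n - j) (b := q) (by
      have := h.le (a := r + n - j) (b := r + n - j + 1) (by omega); omega)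
    have a2 := h.lt_of (a := q) (b := r + n - j + 1) (by omega)
    omega

end Columns

section Moves

variable {n : ℕ} {ι : ℕ → ℕ} {s k : ℤ} {E : ℤ → ℤ}

theorem lowS (h : Good0 n k E) {r j t : ℤ} (h1 : 1 ≤ j) (h2 : j < n) (ha : E r = j)
    (hb : E (r + 1) ≠ j + 1) (ht : t = s + k - r) :
    Good0 n k (Function.update E r (j + 1)) ∧
    TF ι n s k (Function.update E r (j + 1)) = TF ι n s k E - bt ι n t j := by
  have hr := h.row ha (by omega) (by omega)
  have m1 := h.mono r (r + 1) (by omega)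
  have m2 := h.mono (r - 1) r (by omega)
  refine ⟨h.set hr.1 hr.2 (by omega) (by omega) (by omega) (by omega), ?_⟩
  rw [TF_update E r _ hr.1 hr.2, ha, bx_low_small _ _ h2, ht]
  module

theorem raiS (h : Good0 n k E) {r j t : ℤ} (h1 : 1 ≤ j) (h2 : j < n) (ha : E r = j + 1)
    (hb : E (r - 1) ≠ j) (ht : t = s + k - r) :
    Good0 n k (Function.update E r j) ∧
    TF ι n s k (Function.update E r j) = TF ι n s k E + bt ι n t j := by
  have hr := h.row ha (by omega) (by omega)
  have m1 := h.mono r (r + 1) (by omega)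
  have m2 := h.mono (r - 1) r (by omega)
  refine ⟨h.set hr.1 hr.2 (by omega) (by omega) (by omega) (by omega), ?_⟩
  rw [TF_update E r _ hr.1 hr.2, ha, bx_low_small _ _ h2, ht]
  module

theorem lowM (hn : 2 ≤ n) (h : Good0 n k E) {r t : ℤ} (ha : E r = n)
    (hb : E (r + 1) ≠ n + 1) (ht : t = s + k - r) :
    Good0 n k (Function.update E r (n + 1)) ∧
    TF ι n s k (Function.update E r (n + 1)) = TF ι n s k E - bt ι n t n := by
  have hr := h.row ha (by omega) (by omega)
  have m1 := h.mono r (r + 1) (by omega)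
  have m2 := h.mono (r - 1) r (by omega)
  refine ⟨h.set hr.1 hr.2 (by omega) (by omega) (by omega) (by omega), ?_⟩
  rw [TF_update E r _ hr.1 hr.2, ha, bx_low_mid, ht]
  module

theorem raiM (hn : 2 ≤ n) (h : Good0 n k E) {r t : ℤ} (ha : E r = n + 1)
    (hb : E (r - 1) ≠ n) (ht : t = s + k - r) :
    Good0 n k (Function.update E r n) ∧
    TF ι n s k (Function.update E r n) = TF ι n s k E + bt ι n t n := by
  have hr := h.row ha (by omega) (by omega)
  have m1 := h.mono r (r + 1) (by omega)
  have m2 := h.mono (r - 1) r (by omega)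
  refine ⟨h.set hr.1 hr.2 (by omega) (by omega) (by omega) (by omega), ?_⟩
  rw [TF_update E r _ hr.1 hr.2, ha, bx_low_mid, ht]
  module

theorem lowB (h : Good0 n k E) {r j t : ℤ} (h1 : 1 ≤ j) (h2 : j < n) (ha : E r = 2 * n - j)
    (hb : E (r + 1) ≠ 2 * n + 1 - j) (ht : t = s + k - r + n - j) :
    Good0 n k (Function.update E r (2 * n + 1 - j)) ∧
    TF ι n s k (Function.update E r (2 * n + 1 - j)) = TF ι n s k E - bt ι n t j := by
  have hr := h.row ha (by omega) (by omega)
  have m1 := h.mono r (r + 1) (by omega)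
  have m2 := h.mono (r - 1) r (by omega)
  refine ⟨h.set hr.1 hr.2 (by omega) (by omega) (by omega) (by omega), ?_⟩
  rw [TF_update E r _ hr.1 hr.2, ha, bx_low_big _ _ h2, ht]
  module

theorem raiB (h : Good0 n k E) {r j t : ℤ} (h1 : 1 ≤ j) (h2 : j < n) (ha : E r = 2 * n + 1 - j)
    (hb : E (r - 1) ≠ 2 * n - j) (ht : t = s + k - r + n - j) :
    Good0 n k (Function.update E r (2 * n - j)) ∧
    TF ι n s k (Function.update E r (2 * n - j)) = TF ι n s k E + bt ι n t j := by
  have hr := h.row ha (by omega) (by omega)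
  have m1 := h.mono r (r + 1) (by omega)
  have m2 := h.mono (r - 1) r (by omega)
  refine ⟨h.set hr.1 hr.2 (by omega) (by omega) (by omega) (by omega), ?_⟩
  rw [TF_update E r _ hr.1 hr.2, ha, bx_low_big _ _ h2, ht]
  module

theorem DC_mid (h : Good0 n k E) (hD : DC n k E) {r v w : ℤ} (ha : E r = v)
    (hv : v = n ∨ v = n + 1) (hw : w = 2 * n + 1 - v) :
    DC n k (Function.update E r w) := by
  intro hk a b
  have hd := hD hk a b
  have ia : E a = v → a = r := fun hh => h.inj (hh.trans ha.symm)
  have ib : E b = v → b = r := fun hh => h.inj (hh.trans ha.symm)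
  simp only [Function.update_apply]
  split_ifs <;> omega

theorem DC_pair (h : Good0 n k E) (hD : DC n k E) {r r' u v u' v' : ℤ} (hr : E r = u)
    (hr' : E r' = v) (hu : 1 ≤ u) (hv : 1 ≤ v) (hu2 : u ≤ 2 * n) (hv2 : v ≤ 2 * n)
    (hu' : u' = 2 * n + 1 - v) (hv' : v' = 2 * n + 1 - u) :
    DC n k (Function.update (Function.update E r u') r' v') := by
  intro hk a b
  have hd := hD hk a b
  have hd1 := hD hk r r' (by omega) (by omega)
  have ia : E a = u → a = r := fun hh => h.inj (hh.trans hr.symm)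
  have ib : E b = u → b = r := fun hh => h.inj (hh.trans hr.symm)
  have ia' : E a = v → a = r' := fun hh => h.inj (hh.trans hr'.symm)
  have ib' : E b = v → b = r' := fun hh => h.inj (hh.trans hr'.symm)
  simp only [Function.update_apply]
  split_ifs <;> omega

theorem low2 (h : Good0 n k E) (hD : DC n k E) {i j t : ℤ} (h1 : 1 ≤ j) (h2 : j < n)
    (ha : E i = j) (hb : E (i + 1) ≠ j + 1) (hc : E (i + n - j) = 2 * n - j)
    (hd : E (i + n - j + 1) ≠ 2 * n + 1 - j) (ht : t = s + k - i) :
    ∃ E', Good0 n k E' ∧ DC n k E' ∧ TF ι n s k E' = TF ι n s k E - (2 : ℚ) • bt ι n t j := by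
  obtain ⟨g1, e1⟩ := lowS (ι := ι) h h1 h2 ha hb ht
  obtain ⟨g2, e2⟩ := lowB (ι := ι) (r := i + n - j) (t := t) (s := s) g1 h1 h2
    (by rw [Function.update_of_ne (by omega)]; exact hc)
    (by rw [Function.update_of_ne (by omega)]; exact hd) (by omega)
  refine ⟨_, g2, DC_pair h hD ha hc (by omega) (by omega) (by omega) (by omega) (by omega)
    (by omega), ?_⟩
  rw [e2, e1]; module

theorem rai2 (h : Good0 n k E) (hD : DC n k E) {i j t : ℤ} (h1 : 1 ≤ j) (h2 : j < n)
    (ha : E i ≠ j) (hb : E (i + 1) = j + 1) (hc : E (i + n - j) ≠ 2 * n - j)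
    (hd : E (i + n - j + 1) = 2 * n + 1 - j) (ht : t = s + k - i - 1) :
    ∃ E', Good0 n k E' ∧ DC n k E' ∧ TF ι n s k E' = TF ι n s k E + (2 : ℚ) • bt ι n t j
      ∧ E' = Function.update (Function.update E (i + n - j + 1) (2 * n - j)) (i + 1) j := by
  obtain ⟨g1, e1⟩ := raiB (ι := ι) (s := s) (t := t) h h1 h2 hd
    (by rw [add_sub_cancel_right]; exact hc) (by omega)
  obtain ⟨g2, e2⟩ := raiS (ι := ι) (r := i + 1) (t := t) (s := s) g1 h1 h2
    (by rw [Function.update_of_ne (by omega)]; exact hb)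
    (by rw [Function.update_of_ne (by omega), add_sub_cancel_right]; exact ha) (by omega)
  refine ⟨_, g2, DC_pair h hD hd hb (by omega) (by omega) (by omega) (by omega) (by omega)
    (by omega), ?_, rfl⟩
  rw [e2, e1]; module

theorem DC_triv (hk : k ≠ n) : DC n k E := fun h => absurd h hk

theorem ite4_pos (a b c d : Prop) [Decidable a] [Decidable b] [Decidable c] [Decidable d]
    (h : 0 < (if a then (1 : ℚ) else 0) - (if b then 1 else 0) + (if c then 1 else 0)
      - (if d then 1 else 0)) (h1 : ¬ ((a ∧ ¬ b) ∧ (c ∧ ¬ d))) :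
    ((a ∧ ¬ b) ∨ (c ∧ ¬ d)) ∧ (if a then (1 : ℚ) else 0) - (if b then 1 else 0)
      + (if c then 1 else 0) - (if d then 1 else 0) = 1 := by
  by_cases ha : a <;> by_cases hb : b <;> by_cases hc : c <;> by_cases hd : d <;>
    simp only [ha, hb, hc, hd, if_true, if_false] at h h1 ⊢ <;>
    first | (norm_num; done) | (norm_num at h; done) | (norm_num at h1; done)

theorem ite4_neg (a b c d : Prop) [Decidable a] [Decidable b] [Decidable c] [Decidable d]
    (h : ¬ 0 < (if a then (1 : ℚ) else 0) - (if b then 1 else 0) + (if c then 1 else 0)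
      - (if d then 1 else 0))
    (h0 : (if a then (1 : ℚ) else 0) - (if b then 1 else 0) + (if c then 1 else 0)
      - (if d then 1 else 0) ≠ 0) (h1 : ¬ ((¬ a ∧ b) ∧ (¬ c ∧ d))) :
    ((¬ a ∧ b) ∨ (¬ c ∧ d)) ∧ (if a then (1 : ℚ) else 0) - (if b then 1 else 0)
      + (if c then 1 else 0) - (if d then 1 else 0) = -1 := by
  by_cases ha : a <;> by_cases hb : b <;> by_cases hc : c <;> by_cases hd : d <;>
    simp only [ha, hb, hc, hd, if_true, if_false] at h h0 h1 ⊢ <;>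
    first | (norm_num; done) | (norm_num at h; done) | (norm_num at h0; done) | (norm_num at h1; done)

set_option maxHeartbeats 1000000 in
/-- closure of `InT` under the operators -/
theorem InT_step (hn : 2 ≤ n) (hadm : Admissible n ι) (hadap : Adapted n (cartanB n) ι)
    {T : ℕ → ℚ} (hT : InT ι n T) {p : ℕ} (hp : 1 ≤ p) :
    InT ι n (Sop (cartanB n) ι p T) := by
  obtain ⟨k, s, E, h, hD, hs, rfl⟩ := hT
  obtain ⟨t, j, hj1, hj2, ht, rfl⟩ := pos_surj hadm hp
  obtain ⟨i, hi⟩ : ∃ i, t = s + k - i := ⟨s + k - t, by ring⟩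
  rcases hj2.lt_or_eq with hj | rfl
  · have hval := TF_val hadm h hj1 hj ht hi
    have key1 : k = n → (E i = j ∧ E (i + 1) ≠ j + 1 ↔
        E (i + n - j) = 2 * n - j ∧ E (i + n - j + 1) ≠ 2 * n + 1 - j) := fun hk =>
      ⟨fun x => pairP1 h hD hk hj1 hj x.1 x.2, fun x => pairP2 h hD hk hj1 hj x.1 x.2⟩
    have key2 : k = n → (E i ≠ j ∧ E (i + 1) = j + 1 ↔
        E (i + n - j) ≠ 2 * n - j ∧ E (i + n - j + 1) = 2 * n + 1 - j) := fun hk =>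
      ⟨fun x => pairN1 h hD hk hj1 hj x.1 x.2, fun x => pairN2 h hD hk hj1 hj x.1 x.2⟩
    by_cases hpos : 0 < TF ι n s k E (pos ι n t j)
    · rw [Sop_pos hadm hadap hj1 hj2 ht _ hpos]
      by_cases hab : E i = j ∧ E (i + 1) ≠ j + 1
      · by_cases hcd : E (i + n - j) = 2 * n - j ∧ E (i + n - j + 1) ≠ 2 * n + 1 - j
        · obtain ⟨E', g, d, e⟩ := low2 (ι := ι) h hD hj1 hj hab.1 hab.2 hcd.1 hcd.2 hi
          refine ⟨k, s, E', g, d, hs, ?_⟩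
          rw [e, hval, if_pos hab.1, if_neg hab.2, if_pos hcd.1, if_neg hcd.2]
          norm_num
        · obtain ⟨g, e⟩ := lowS (ι := ι) h hj1 hj hab.1 hab.2 hi
          have hk : k ≠ n := fun hk => hcd ((key1 hk).1 hab)
          refine ⟨k, s, _, g, DC_triv hk, hs, ?_⟩
          have hv : TF ι n s k E (pos ι n t j) = 1 := by
            rw [hval] at hpos ⊢
            exact (ite4_pos _ _ _ _ hpos (by tauto)).2
          rw [e, hv, one_smul]
      · by_cases hcd : E (i + n - j) = 2 * n - j ∧ E (i + n - j + 1) ≠ 2 * n + 1 - j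
        · obtain ⟨g, e⟩ := lowB (ι := ι) (t := t) (s := s) h hj1 hj hcd.1 hcd.2 (by omega)
          have hk : k ≠ n := fun hk => hab ((key1 hk).2 hcd)
          refine ⟨k, s, _, g, DC_triv hk, hs, ?_⟩
          have hv : TF ι n s k E (pos ι n t j) = 1 := by
            rw [hval] at hpos ⊢
            exact (ite4_pos _ _ _ _ hpos (by tauto)).2
          rw [e, hv, one_smul]
        · exfalso
          rw [hval] at hpos
          exact not_or.2 ⟨hab, hcd⟩ (ite4_pos _ _ _ _ hpos (by tauto)).1
    · rw [Sop_neg hadm hadap hj1 hj2 ht _ hpos]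
      by_cases htt : 1 ≤ t - 1 + Pz ι n j
      swap
      · rw [if_neg htt, smul_zero, sub_zero]
        exact ⟨k, s, E, h, hD, hs, rfl⟩
      rw [if_pos htt]
      by_cases hv0 : TF ι n s k E (pos ι n t j) = 0
      · rw [hv0, zero_smul, sub_zero]
        exact ⟨k, s, E, h, hD, hs, rfl⟩
      by_cases hab : E i ≠ j ∧ E (i + 1) = j + 1
      · by_cases hcd : E (i + n - j) ≠ 2 * n - j ∧ E (i + n - j + 1) = 2 * n + 1 - j
        · obtain ⟨E', g, d, e, -⟩ := rai2 (ι := ι) (s := s) (t := t - 1) h hD hj1 hj hab.1 hab.2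
            hcd.1 hcd.2 (by omega)
          refine ⟨k, s, E', g, d, hs, ?_⟩
          rw [e, hval, if_neg hab.1, if_pos hab.2, if_neg hcd.1, if_pos hcd.2]
          module
        · obtain ⟨g, e⟩ := raiS (ι := ι) (s := s) (t := t - 1) h hj1 hj hab.2
            (by rw [add_sub_cancel_right]; exact hab.1) (by omega)
          have hk : k ≠ n := fun hk => hcd ((key2 hk).1 hab)
          refine ⟨k, s, _, g, DC_triv hk, hs, ?_⟩
          have hv : TF ι n s k E (pos ι n t j) = -1 := by
            rw [hval] at hpos hv0 ⊢
            exact (ite4_neg _ _ _ _ hpos hv0 (by tauto)).2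
          rw [e, hv]
          module
      · by_cases hcd : E (i + n - j) ≠ 2 * n - j ∧ E (i + n - j + 1) = 2 * n + 1 - j
        · obtain ⟨g, e⟩ := raiB (ι := ι) (s := s) (t := t - 1) h hj1 hj hcd.2
            (by rw [add_sub_cancel_right]; exact hcd.1) (by omega)
          have hk : k ≠ n := fun hk => hab ((key2 hk).2 hcd)
          refine ⟨k, s, _, g, DC_triv hk, hs, ?_⟩
          have hv : TF ι n s k E (pos ι n t j) = -1 := by
            rw [hval] at hpos hv0 ⊢
            exact (ite4_neg _ _ _ _ hpos hv0 (by tauto)).2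
          rw [e, hv]
          module
        · exfalso
          rw [hval] at hpos hv0
          exact not_or.2 ⟨hab, hcd⟩ (ite4_neg _ _ _ _ hpos hv0 (by tauto)).1
  · have hval := TF_val_n hadm hn h ht hi
    by_cases hpos : 0 < TF ι n s k E (pos ι n t n)
    · rw [Sop_pos hadm hadap hj1 hj2 ht _ hpos]
      have hab : E i = n ∧ E (i + 1) ≠ n + 1 := by
        rw [hval] at hpos
        split_ifs at hpos <;> first | tauto | (norm_num at hpos; done)
      obtain ⟨g, e⟩ := lowM (ι := ι) hn h hab.1 hab.2 hi
      refine ⟨k, s, _, g, DC_mid h hD hab.1 (Or.inl rfl) (by ring), hs, ?_⟩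
      rw [e, hval, if_pos hab.1, if_neg hab.2]
      module
    · rw [Sop_neg hadm hadap hj1 hj2 ht _ hpos]
      by_cases htt : 1 ≤ t - 1 + Pz ι n n
      swap
      · rw [if_neg htt, smul_zero, sub_zero]
        exact ⟨k, s, E, h, hD, hs, rfl⟩
      rw [if_pos htt]
      by_cases hab : E i ≠ n ∧ E (i + 1) = n + 1
      · obtain ⟨g, e⟩ := raiM (ι := ι) (s := s) (t := t - 1) hn h hab.2
            (by rw [add_sub_cancel_right]; exact hab.1) (by omega)
        refine ⟨k, s, _, g, DC_mid h hD hab.2 (Or.inr rfl) (by ring), hs, ?_⟩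
        rw [e, hval, if_neg hab.1, if_pos hab.2]
        module
      · have hv : TF ι n s k E (pos ι n t n) = 0 := by
          rw [hval] at hpos ⊢
          split_ifs at hpos ⊢ <;>
            first | (exfalso; tauto) | (exfalso; norm_num at hpos; done) | norm_num
        rw [hv, zero_smul, sub_zero]
        exact ⟨k, s, E, h, hD, hs, rfl⟩

end Moves

section Reach

variable {n : ℕ} {ι : ℕ → ℕ} {s k : ℤ} {E : ℤ → ℤ}

theorem telescope {M : Type*} [AddCommGroup M] (f : ℤ → M) (m : ℕ) :
    ∑ r ∈ Finset.Icc (1 : ℤ) m, (f r - f (r - 1)) = f m - f 0 := by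
  induction m with
  | zero => simp
  | succ m ih =>
    have : Finset.Icc (1 : ℤ) ((m + 1 : ℕ) : ℤ) = insert ((m + 1 : ℕ) : ℤ) (Finset.Icc (1 : ℤ) m) := by
      ext x
      simp only [Finset.mem_insert, Finset.mem_Icc]
      omega
    rw [this, Finset.sum_insert (by simp), ih]
    rw [show ((m + 1 : ℕ) : ℤ) - 1 = m by push_cast; ring]
    abel

theorem TF_init (h1 : 1 ≤ k) (h2 : k ≤ n) (hE : ∀ r, 1 ≤ r → r ≤ k → E r = r) :
    TF ι n s k E = yy ι n s k := by
  have e := telescope (fun r => yy ι n (s + k - r) r) k.toNat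
  rw [show ((k.toNat : ℕ) : ℤ) = k by omega] at e
  have e2 : TF ι n s k E =
      ∑ r ∈ Finset.Icc (1 : ℤ) k, (yy ι n (s + k - r) r - yy ι n (s + k - (r - 1)) (r - 1)) := by
    apply Finset.sum_congr rfl
    intro r hr
    rw [Finset.mem_Icc] at hr
    rw [hE r hr.1 hr.2, bx, if_pos (by omega), show s + k - r + 1 = s + k - (r - 1) by ring]
  rw [e2, e, yy_zero, sub_zero, show s + k - k = s by ring]

theorem InT_base (hadm : Admissible n ι) {p : ℕ} (hp : 1 ≤ p) : InT ι n (xc p) := by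
  obtain ⟨t, j, hj1, hj2, ht, rfl⟩ := pos_surj hadm hp
  refine ⟨j, t, fun r => if r ≤ j then r else 2 * n + r, ⟨hj1, hj2, ?_, ?_, ?_, ?_⟩, ?_,
    by omega, ?_⟩
  · intro a b hab; (try dsimp only); split_ifs <;> omega
  · intro a ha; (try dsimp only); split_ifs <;> omega
  · intro a ha; (try dsimp only); split_ifs <;> omega
  · intro a ha hb; (try dsimp only); split_ifs <;> omega
  · intro hk a b; (try dsimp only); split_ifs <;> omega
  · rw [TF_init hj1 hj2, yy_eq hj1 hj2 ht]
    intro r _ hr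
    (try dsimp only)
    rw [if_pos hr]

theorem Xi_step (hadm : Admissible n ι) (hadap : Adapted n (cartanB n) ι)
    {t j : ℤ} (h1 : 1 ≤ j) (h2 : j ≤ n) (ht : 1 ≤ t + Pz ι n j) {φ ψ : ℕ → ℚ} {c : ℚ}
    (hc : 0 < c) (hψ : XiMem (cartanB n) ι ψ) (hv : ψ (pos ι n t j) = c)
    (he : ψ = φ + c • bt ι n t j) : XiMem (cartanB n) ι φ := by
  have := XiMem.step (pos ι n t j) (pos_pos hadm h1 h2 ht) ψ hψ
  rw [Sop_pos hadm hadap h1 h2 ht ψ (by rw [hv]; exact hc), hv] at this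
  have e : ψ - c • bt ι n t j = φ := by rw [he]; module
  rwa [e] at this

theorem first_diff (E : ℤ → ℤ) (m : ℕ) : (∀ r : ℤ, 1 ≤ r → r ≤ m → E r = r) ∨
    ∃ i : ℤ, 1 ≤ i ∧ i ≤ m ∧ E i ≠ i ∧ ∀ r : ℤ, 1 ≤ r → r < i → E r = r := by
  induction m with
  | zero => left; intro r h1 h2; push_cast at h2; omega
  | succ m ih =>
    rcases ih with h | ⟨i, h1, h2, h3, h4⟩
    · by_cases hm : E (m + 1) = m + 1
      · left
        intro r hr hr'
        push_cast at hr'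
        by_cases e : r = m + 1
        · rw [e]; exact hm
        · exact h r hr (by omega)
      · right
        exact ⟨m + 1, by omega, by push_cast; omega, hm, fun r hr hr' => h r hr (by omega)⟩
    · right
      exact ⟨i, h1, by push_cast; omega, h3, h4⟩

set_option maxHeartbeats 1000000 in
theorem reach (hn : 2 ≤ n) (hadm : Admissible n ι) (hadap : Adapted n (cartanB n) ι)
    (hs : 1 - Pz ι n k ≤ s) (N : ℕ) : ∀ E, Good0 n k E → DC n k E → MM n k E ≤ N →
      XiMem (cartanB n) ι (TF ι n s k E) := by
  induction N using Nat.strong_induction_on with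
  | _ N ih =>
  intro E h hD hM
  have ih' : ∀ E', Good0 n k E' → DC n k E' → MM n k E' < MM n k E →
      XiMem (cartanB n) ι (TF ι n s k E') := by
    intro E' g d hlt
    have := MM_nonneg g
    exact ih (MM n k E').toNat (by omega) E' g d (by omega)
  have hk1 := h.hk1
  have hk2 := h.hk2
  rcases first_diff E k.toNat with hinit | ⟨i, hi1, hi2, hi3, hi4⟩
  · rw [TF_init hk1 hk2 (fun r h1 h2 => hinit r h1 (by omega)), yy_eq hk1 hk2 (by omega)]
    exact XiMem.base _ (pos_pos hadm hk1 hk2 (by omega))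
  replace hi2 : i ≤ k := by omega
  have hprev : i - 1 ≤ E (i - 1) ∨ i = 1 := by
    by_cases e : i = 1
    · exact Or.inr e
    · left; rw [hi4 (i - 1) (by omega) (by omega)]
  have hprev' : E (i - 1) ≤ i - 1 := by
    by_cases e : i = 1
    · have := h.lo (i - 1) (by omega); omega
    · rw [hi4 (i - 1) (by omega) (by omega)]
  have hmi := h.mono (i - 1) i (by omega)
  have hrng := h.rng i hi1 hi2
  have hgt : i < E i := by omega
  have hi4' : ∀ r, r < i → E r ≤ 0 ∨ E r = r := by
    intro r hr
    by_cases e : r ≤ 0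
    · exact Or.inl (h.lo r e)
    · exact Or.inr (hi4 r (by omega) hr)
  rcases lt_trichotomy (E i) (n + 1) with hc | hc | hc
  · -- unbarred entry
    obtain ⟨j, hj⟩ : ∃ j, E i = j + 1 := ⟨E i - 1, by ring⟩
    have hj1 : 1 ≤ j := by omega
    have hj2 : j < n := by omega
    have hbase : 1 ≤ s + k - i + Pz ι n j := by
      rcases le_total j k with hjk | hjk
      · have := Pz_le (ι := ι) (n := n) (i := j) (j := k) (by omega) hjk hk2; omega
      · have := Pz_le (ι := ι) (n := n) (i := k) (j := j) (by omega) hjk hj2.le; omega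
    by_cases hkn : k = n
    · -- full column: double move
      have hN := pairN1 h hD hkn (r := i - 1) hj1 hj2 (by omega) (by rw [sub_add_cancel]; exact hj)
      obtain ⟨E', g, d, e, hE'⟩ := rai2 (ι := ι) (s := s) (t := s + k - i) (i := i - 1) h hD hj1 hj2
        (by omega) (by rw [sub_add_cancel]; exact hj) hN.1 hN.2 (by ring)
      have hrow := h.row hN.2 (by omega) (by omega)
      refine Xi_step hadm hadap (t := s + k - i) (j := j) hj1 hj2.le hbase two_pos
        (ih' E' g d ?_) ?_ e
      · rw [hE', MM_update _ _ _ (by omega) (by omega), MM_update _ _ _ hrow.1 hrow.2,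
          Function.update_of_ne (by omega), hN.2, sub_add_cancel, hj]
        unfold mm
        rw [if_neg (by omega), if_neg (by omega), if_pos (by omega), if_pos (by omega)]
        omega
      · have v1 : E' i = j := by rw [hE', sub_add_cancel, Function.update_self]
        have v2 : E' (i + n - j) = 2 * n - j := by
          rw [hE', Function.update_of_ne (by omega),
            show i - 1 + n - j + 1 = i + n - j by ring, Function.update_self]
        have v3 : E' (i + 1) ≠ j + 1 := by
          intro hh
          rcases (show i + 1 = i + n - j ∨ i + 1 ≠ i + n - j by omega) with e0 | e0
          · rw [e0, v2] at hh; omega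
          · rw [hE', Function.update_of_ne (by omega), Function.update_of_ne (by omega)] at hh
            have := h.mono i (i + 1) (by omega)
            omega
        have v4 : E' (i + n - j + 1) ≠ 2 * n + 1 - j := by
          rw [hE', Function.update_of_ne (by omega), Function.update_of_ne (by omega)]
          have := h.mono (i - 1 + n - j + 1) (i + n - j + 1) (by omega)
          omega
        rw [TF_val hadm g hj1 hj2 hbase rfl, if_pos v1, if_pos v2, if_neg v3, if_neg v4]
        norm_num
    · by_cases hA : E (i + n - j) = 2 * n - j ∧ E (i + n - j + 1) ≠ 2 * n + 1 - j
      · -- flip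
        have hrow := h.row hA.1 (by omega) (by omega)
        have m1 := h.mono (i + n - j) (i + n - j + 1) (by omega)
        have m2 := h.mono (i + n - j - 1) (i + n - j) (by omega)
        have g1 := h.set hrow.1 hrow.2 (w := 2 * n + 1 - j) (by omega) (by omega) (by omega)
          (by omega)
        have m3 := g1.mono i (i + 1) (by omega)
        have hx : Function.update E (i + n - j) (2 * n + 1 - j) i = j + 1 := by
          rw [Function.update_of_ne (by omega)]; exact hj
        have g2 := g1.set hi1 hi2 (w := j)
          (by rw [Function.update_of_ne (by omega)]; omega) (by omega) (by omega) (by omega)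
        have e : TF ι n s k E = TF ι n s k (Function.update
            (Function.update E (i + n - j) (2 * n + 1 - j)) i j) := by
          rw [TF_update _ _ _ hi1 hi2, TF_update _ _ _ hrow.1 hrow.2, hx, hA.1]
          have := bx_flip (ι := ι) (n := n) (s + k - i) (s + k - (i + n - j)) j hj2 (by ring)
          rw [← sub_eq_zero] at this ⊢
          rw [← this]
          abel
        rw [e]
        refine ih' _ g2 (DC_triv hkn) ?_
        rw [MM_update _ _ _ hi1 hi2, MM_update _ _ _ hrow.1 hrow.2, hx, hA.1]
        unfold mm
        split_ifs <;> omega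
      · by_cases hB : E (i + n - j) ≠ 2 * n - j ∧ E (i + n - j + 1) = 2 * n + 1 - j
        · -- raise the barred entry
          obtain ⟨g, e⟩ := raiB (ι := ι) (s := s) (t := s + k - (i + 1)) h hj1 hj2 hB.2
            (by rw [add_sub_cancel_right]; exact hB.1) (by ring)
          have hrow := h.row hB.2 (by omega) (by omega)
          have hb2 : 1 ≤ s + k - (i + 1) + Pz ι n j := by
            rcases le_total j k with hjk | hjk
            · have := Pz_le (ι := ι) (n := n) (i := j) (j := k) (by omega) hjk hk2; omega
            · have := Pz_le (ι := ι) (n := n) (i := k) (j := j) (by omega) hjk hj2.le; omega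
          refine Xi_step hadm hadap (t := s + k - (i + 1)) (j := j) hj1 hj2.le hb2 one_pos
            (ih' _ g (DC_triv hkn) ?_) ?_ (by rw [e, one_smul])
          · rw [MM_update _ _ _ hrow.1 hrow.2, hB.2]
            unfold mm
            rw [if_neg (by omega), if_neg (by omega)]
            omega
          · have m1 := h.mono i (i + 1) (by omega)
            have m2 := h.mono (i + 1) (i + 1 + 1) (by omega)
            have m3 := h.mono (i + n - j + 1) (i + n - j + 1 + 1) (by omega)
            have v1 : Function.update E (i + n - j + 1) (2 * n - j) (i + 1) ≠ j := by
              rw [Function.update_of_ne (by omega)]; omega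
            have v2 : Function.update E (i + n - j + 1) (2 * n - j) (i + 1 + 1) ≠ j + 1 := by
              rw [Function.update_apply]; split_ifs <;> omega
            have v3 : Function.update E (i + n - j + 1) (2 * n - j) (i + 1 + n - j)
                = 2 * n - j := by
              rw [show i + 1 + n - j = i + n - j + 1 by ring, Function.update_self]
            have v4 : Function.update E (i + n - j + 1) (2 * n - j) (i + 1 + n - j + 1)
                ≠ 2 * n + 1 - j := by
              rw [Function.update_of_ne (by omega),
                show i + 1 + n - j + 1 = i + n - j + 1 + 1 by ring]; omega
            rw [TF_val hadm g hj1 hj2 hb2 rfl, if_neg v1, if_neg v2, if_pos v3, if_neg v4]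
            norm_num
        · -- raise the unbarred entry
          obtain ⟨g, e⟩ := raiS (ι := ι) (s := s) (t := s + k - i) h hj1 hj2 hj
            (by omega) rfl
          refine Xi_step hadm hadap (t := s + k - i) (j := j) hj1 hj2.le hbase one_pos
            (ih' _ g (DC_triv hkn) ?_) ?_ (by rw [e, one_smul])
          · rw [MM_update _ _ _ hi1 hi2, hj]
            unfold mm
            rw [if_pos (by omega), if_pos (by omega)]
            omega
          · have m1 := h.mono i (i + 1) (by omega)
            have v1 : Function.update E i j i = j := Function.update_self ..
            have v2 : Function.update E i j (i + 1) ≠ j + 1 := by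
              rw [Function.update_of_ne (by omega)]; omega
            rw [TF_val hadm g hj1 hj2 hbase rfl, if_pos v1, if_neg v2,
              Function.update_of_ne (show i + n - j ≠ i by omega),
              Function.update_of_ne (show i + n - j + 1 ≠ i by omega)]
            by_cases hcc : E (i + n - j) = 2 * n - j
            · have hdd : E (i + n - j + 1) = 2 * n + 1 - j := by
                by_contra hdd
                exact hA ⟨hcc, hdd⟩
              rw [if_pos hcc, if_pos hdd]; norm_num
            · have hdd : E (i + n - j + 1) ≠ 2 * n + 1 - j := fun hdd => hB ⟨hcc, hdd⟩
              rw [if_neg hcc, if_neg hdd]; norm_num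
  · -- the middle
    obtain ⟨g, e⟩ := raiM (ι := ι) (s := s) (t := s + k - i) hn h hc
      (by omega) rfl
    have hbase : 1 ≤ s + k - i + Pz ι n n := by
      have := Pz_le (ι := ι) (n := n) (i := k) (j := n) (by omega) hk2 le_rfl; omega
    refine Xi_step hadm hadap (t := s + k - i) (j := n) (by omega) le_rfl hbase one_pos
      (ih' _ g (DC_mid h hD hc (Or.inr rfl) (by ring)) ?_) ?_ (by rw [e, one_smul])
    · rw [MM_update _ _ _ hi1 hi2, hc]
      unfold mm
      rw [if_pos (by omega), if_neg (by omega)]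
      omega
    · have m1 := h.mono i (i + 1) (by omega)
      have v1 : Function.update E i (n : ℤ) i = n := Function.update_self ..
      have v2 : Function.update E i (n : ℤ) (i + 1) ≠ n + 1 := by
        rw [Function.update_of_ne (by omega)]; omega
      rw [TF_val_n hadm hn g hbase rfl, if_pos v1, if_neg v2]
      norm_num
  · -- barred entry
    obtain ⟨j, hj⟩ : ∃ j, E i = 2 * n + 1 - j := ⟨2 * n + 1 - E i, by ring⟩
    have hj1 : 1 ≤ j := by omega
    have hj2 : j < n := by omega
    have hkn : k ≠ n := by
      intro hkn
      obtain ⟨q, hq⟩ := value_or h hD hkn (v := j + 1) (by omega) (by omega)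
      rcases hq with hq | hq
      · have hqi := h.lt_of (a := q) (b := i) (by omega)
        rcases hi4' q hqi with h5 | h5
        · omega
        · have h6 := hi4' j (by omega)
          have h7 := hD hkn i j (by omega) (by omega)
          rcases h6 with h6 | h6
          · have := h.rng j (by omega) (by omega); omega
          · omega
      · have a1 := h.lt_of (a := q) (b := i) (by omega)
        have a2 := h.lt_of (a := i - 1) (b := q) (by omega)
        omega
    obtain ⟨g, e⟩ := raiB (ι := ι) (s := s) (t := s + k - (i - n + j)) h hj1 hj2 hj
      (by omega) (by ring)
    have hbase : 1 ≤ s + k - (i - n + j) + Pz ι n j := by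
      rcases le_total j k with hjk | hjk
      · have := Pz_le (ι := ι) (n := n) (i := j) (j := k) (by omega) hjk hk2; omega
      · have := Pz_le (ι := ι) (n := n) (i := k) (j := j) (by omega) hjk hj2.le; omega
    refine Xi_step hadm hadap (t := s + k - (i - n + j)) (j := j) hj1 hj2.le hbase one_pos
      (ih' _ g (DC_triv hkn) ?_) ?_ (by rw [e, one_smul])
    · rw [MM_update _ _ _ hi1 hi2, hj]
      unfold mm
      rw [if_neg (by omega), if_neg (by omega)]
      omega
    · have m1 := h.mono i (i + 1) (by omega)
      have v1 : Function.update E i (2 * n - j) (i - n + j) ≠ j := by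
        rw [Function.update_of_ne (by omega)]
        rcases hi4' (i - n + j) (by omega) with h5 | h5 <;> omega
      have v2 : Function.update E i (2 * n - j) (i - n + j + 1) ≠ j + 1 := by
        rw [Function.update_apply]
        split_ifs with hh
        · omega
        · rcases hi4' (i - n + j + 1) (by omega) with h5 | h5 <;> omega
      have v3 : Function.update E i (2 * n - j) (i - n + j + n - j) = 2 * n - j := by
        rw [show i - n + j + n - j = i by ring, Function.update_self]
      have v4 : Function.update E i (2 * n - j) (i - n + j + n - j + 1) ≠ 2 * n + 1 - j := by
        rw [show i - n + j + n - j + 1 = i + 1 by ring, Function.update_of_ne (by omega)]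
        omega
      rw [TF_val hadm g hj1 hj2 hbase rfl, if_neg v1, if_neg v2, if_pos v3, if_neg v4]
      norm_num

theorem InT_iff_Xi (hn : 2 ≤ n) (hadm : Admissible n ι) (hadap : Adapted n (cartanB n) ι)
    (T : ℕ → ℚ) : XiMem (cartanB n) ι T ↔ InT ι n T := by
  constructor
  · intro h
    induction h with
    | base p hp => exact InT_base hadm hp
    | step p hp φ _ ih => exact InT_step hn hadm hadap ih hp
  · rintro ⟨k, s, E, h, hD, hs, rfl⟩
    exact reach hn hadm hadap hs (MM n k E).toNat E h hD (by omega)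

theorem sum_Icc_int {M : Type*} [AddCommMonoid M] (k : ℕ) (f : ℤ → M) :
    ∑ r ∈ Finset.Icc (1 : ℤ) k, f r = ∑ i ∈ Finset.Icc 1 k, f (i : ℤ) := by
  symm
  refine Finset.sum_bij (fun (i : ℕ) _ => (i : ℤ)) ?_ ?_ ?_ ?_
  · intro a ha; rw [Finset.mem_Icc] at *; omega
  · intro a _ b _ hab; omega
  · intro b hb
    rw [Finset.mem_Icc] at hb
    exact ⟨b.toNat, Finset.mem_Icc.2 (by omega), by omega⟩
  · intro a _; rfl

theorem tab_eq_TF (s : ℤ) (k : ℕ) (e : ℕ → ℕ) (E : ℤ → ℤ)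
    (hE : ∀ i : ℕ, 1 ≤ i → i ≤ k → E i = e i)
    (he : ∀ i, 1 ≤ i → i ≤ k → 1 ≤ e i ∧ e i ≤ 2 * n) :
    tab (boxB ι n) s k e = TF ι n s k E := by
  unfold tab TF
  rw [sum_Icc_int]
  apply Finset.sum_congr rfl
  intro i hi
  rw [Finset.mem_Icc] at hi
  have := he i hi.1 hi.2
  rw [boxB_eq _ _ this.1 this.2, hE i hi.1 hi.2]

theorem InT_iff_TabB (T : ℕ → ℚ) : InT ι n T ↔ T ∈ TabB ι n := by
  constructor
  · rintro ⟨k, s, E, h, hD, hs, rfl⟩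
    have hk1 := h.hk1
    have hk2 := h.hk2
    lift k to ℕ using (by omega)
    have hc : ∀ i : ℕ, 1 ≤ i → i ≤ k → ((E i).toNat : ℤ) = E i ∧ 1 ≤ E i ∧ E i ≤ 2 * n := by
      intro i h1 h2
      have := h.rng i (by omega) (by omega)
      omega
    refine ⟨k, s, fun i => (E i).toNat, by omega, by omega, ?_, ?_, ?_, ?_, ?_⟩
    · intro i h1 h2
      have := hc i h1 h2
      (try dsimp only)
      omega
    · intro i h1 h2
      have a1 := hc i h1 h2.le
      have a2 := hc (i + 1) (by omega) h2
      have := h.mono i ((i + 1 : ℕ) : ℤ) (by push_cast; omega)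
      (try dsimp only)
      omega
    · intro hk l m h1 h2 h3
      have a1 := hc l h1 (by omega)
      have a2 := hc m (by omega) h3
      have := h.mono l m (by omega)
      have := hD (by omega) l m a1.2.1 a1.2.2
      unfold absJ
      (try dsimp only)
      split_ifs <;> omega
    · simpa [Pz] using hs
    · rw [tab_eq_TF (E := E)]
      · intro i h1 h2; exact (hc i h1 h2).1.symm
      · intro i h1 h2
        have := hc i h1 h2
        (try dsimp only)
        omega
  · rintro ⟨k, s, e, hk1, hk2, he, hmono, hD, hs, rfl⟩
    have hm : ∀ a b, 1 ≤ a → a < b → b ≤ k → e a < e b := by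
      intro a b ha hab hb
      induction b, hab using Nat.le_induction with
      | base => exact hmono a ha (by omega)
      | succ b hb' ih =>
        have := ih (by omega)
        have := hmono b (by omega) (by omega)
        omega
    refine ⟨k, s, fun r => if r ≤ 0 then r else if r ≤ k then e r.toNat else 2 * n + r,
      ⟨by omega, by omega, ?_, ?_, ?_, ?_⟩, ?_, by simpa [Pz] using hs, ?_⟩
    · intro a b hab
      (try dsimp only)
      have h1 := he a.toNat
      have h2 := he b.toNat
      have h3 := hm a.toNat b.toNat
      split_ifs <;> omega
    · intro a ha; (try dsimp only); rw [if_pos ha]; exact ha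
    · intro a ha; (try dsimp only); rw [if_neg (by omega), if_neg (by omega)]; omega
    · intro a ha hb; (try dsimp only); rw [if_neg (by omega), if_pos (by omega)]
      have h1 := he a.toNat
      omega
    · intro hk a b
      (try dsimp only)
      have h1 := he a.toNat
      have h2 := he b.toNat
      have h3 := hD (by omega) a.toNat b.toNat
      have h4 := hD (by omega) b.toNat a.toNat
      unfold absJ at h3 h4
      have h5 : a = b ∨ a < b ∨ b < a := by omega
      rcases h5 with rfl | h5 | h5
      · split_ifs <;> omega
      · split_ifs at h3 ⊢ <;> omega
      · split_ifs at h4 ⊢ <;> omega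
    · apply tab_eq_TF _ _ _ _ _ he
      intro i h1 h2
      rw [if_neg (by omega), if_pos (by omega)]
      simp

end Reach

/-- Theorem 3.5 (type B): for an adapted sequence, `Ξ_ι = Tab_{B,ι}`. -/
theorem XiEqTabB (n : ℕ) (hn : 2 ≤ n) (ι : ℕ → ℕ)
    (hadm : Admissible n ι) (hadap : Adapted n (cartanB n) ι) :
    Xi (cartanB n) ι = TabB ι n := by
  ext T
  exact (InT_iff_Xi hn hadm hadap T).trans (InT_iff_TabB T)
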